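/- arXiv:1911.01494 — 4 statements merged into one kernel-verified Lean document; each statement's English description precedes it below -/
import Mathlib

section
/- For every integer r ≥ 2, the group 𝒫 = ⟨u, o | u o u⁻¹ = o^r⟩ embeds into the solution group Γ of a binary linear system with 16r+75 variables and 14r+62 equations (each equation containing 3 variables): there exists an injective group homomorphism 𝒫 → Γ mapping u to a₃a₄ and o to a₁a₂. -/
/-- The generators `o₁, …, o_r, u₁, …, u₅` of the group `𝒫₀`. -/
inductive P0Gen (r : ℕ) : Type
  | o : Fin r → P0Gen r
  | u : Fin 5 → P0Gen r

/-- The free-group letter `o_k` (`1 ≤ k ≤ r`; junk value `1` out of range). -/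
def oW (r : ℕ) (k : ℕ) : FreeGroup (P0Gen r) :=
  if h : 1 ≤ k ∧ k ≤ r then FreeGroup.of (P0Gen.o ⟨k - 1, by omega⟩) else 1

/-- The free-group letter `u_k` (`1 ≤ k ≤ 5`; junk value `1` out of range). -/
def uW (r : ℕ) (k : ℕ) : FreeGroup (P0Gen r) :=
  if h : 1 ≤ k ∧ k ≤ 5 then FreeGroup.of (P0Gen.u ⟨k - 1, by omega⟩) else 1

/-- The relations `s² = e` for every generator `s` of `𝒫₀`. -/
def P0RelsSq (r : ℕ) : Set (FreeGroup (P0Gen r)) :=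
  Set.range fun g : P0Gen r => FreeGroup.of g * FreeGroup.of g

/-- The relations `u₃ = u₂o₁u₂`, `u₄ = u₂o₂u₂`, `u₅ = u₁u₃u₁`, `o₂ = u₁u₄u₁`,
`u₅ = o₁o_r o₁` of `𝒫₀`. -/
def P0RelsU (r : ℕ) : Set (FreeGroup (P0Gen r)) :=
  { uW r 2 * oW r 1 * uW r 2 * (uW r 3)⁻¹,
    uW r 2 * oW r 2 * uW r 2 * (uW r 4)⁻¹,
    uW r 1 * uW r 3 * uW r 1 * (uW r 5)⁻¹,
    uW r 1 * uW r 4 * uW r 1 * (oW r 2)⁻¹,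
    oW r 1 * oW r r * oW r 1 * (uW r 5)⁻¹ }

/-- The remaining conjugacy relations of `𝒫₀`: if `r` is even, `o_{1+2j} = o₁o_{2j}o₁` and
`o_{2+2j} = o₂o_{1+2j}o₂` for `j = 1, …, r/2 − 1`; if `r` is odd, `o₃ = o₂o₁o₂` together
with `o_{2+2j} = o₁o_{1+2j}o₁` and `o_{3+2j} = o₂o_{2+2j}o₂` for `j = 1, …, (r−3)/2`. -/
def P0RelsO (r : ℕ) : Set (FreeGroup (P0Gen r)) :=
  if Even r then
    ⋃ j ∈ Finset.Icc 1 (r / 2 - 1),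
      ({oW r 1 * oW r (2 * j) * oW r 1 * (oW r (1 + 2 * j))⁻¹,
        oW r 2 * oW r (1 + 2 * j) * oW r 2 * (oW r (2 + 2 * j))⁻¹} :
          Set (FreeGroup (P0Gen r)))
  else
    {oW r 2 * oW r 1 * oW r 2 * (oW r 3)⁻¹} ∪
    ⋃ j ∈ Finset.Icc 1 ((r - 3) / 2),
      ({oW r 1 * oW r (1 + 2 * j) * oW r 1 * (oW r (2 + 2 * j))⁻¹,
        oW r 2 * oW r (2 + 2 * j) * oW r 2 * (oW r (3 + 2 * j))⁻¹} :
          Set (FreeGroup (P0Gen r)))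

/-- All defining relations of `𝒫₀`. -/
def P0Rels (r : ℕ) : Set (FreeGroup (P0Gen r)) := P0RelsSq r ∪ P0RelsU r ∪ P0RelsO r

/-- The group `𝒫₀`, presented by the above generators and relations. -/
abbrev P0 (r : ℕ) : Type := PresentedGroup (P0Rels r)

/-- The generators `u`, `o` of the group `𝒫 = ⟨u, o | u o u⁻¹ = o^r⟩`. -/
inductive PGen : Type
  | u : PGen
  | o : PGen

/-- The single relation `u o u⁻¹ o^{-r}` of `𝒫`. -/
def PRels (r : ℕ) : Set (FreeGroup PGen) :=
  {FreeGroup.of PGen.u * FreeGroup.of PGen.o * (FreeGroup.of PGen.u)⁻¹ *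
    (FreeGroup.of PGen.o ^ r)⁻¹}

/-- The group `𝒫 = ⟨u, o | u o u⁻¹ = o^r⟩`. -/
abbrev Pgrp (r : ℕ) : Type := PresentedGroup (PRels r)

/-- The relabelled generator-word `a_i` of `𝒫₀`: `a₁ = o₁`, `a₂ = o₂`, `a_{i+2} = u_i`
for `i = 1, …, 5`, and `a_j = o_{j−5}` for `j = 8, …, r+5`. -/
def aW (r : ℕ) (i : ℕ) : FreeGroup (P0Gen r) :=
  if i ≤ 2 then oW r i else if i ≤ 7 then uW r (i - 2) else oW r (i - 5)

/-- `C(r)`: the set of triples `(i,j,k)` such that `a_i a_j a_i = a_k` is one of the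
conjugacy relations of `𝒫₀`. -/
def Cset (r : ℕ) : Set (ℕ × ℕ × ℕ) :=
  {t | aW r t.1 * aW r t.2.1 * aW r t.1 * (aW r t.2.2)⁻¹ ∈ P0RelsU r ∪ P0RelsO r}

/-- The generators of the solution group `Γ`: `a_i, b_i, c_i, d_i, p_{i,1}, …, p_{i,5}`
(`1 ≤ i ≤ r+5`), `f₀, f₁, f₂, g₀, g₁, g₂, m₀, m₁, m₂`, `h_{jk}` and `q_{c,1}, …, q_{c,6}`
(one family for each `c = (i,j,k) ∈ C(r)`), together with the central generator `J`. -/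
inductive GaGen (r : ℕ) : Type
  | a : Fin (r + 5) → GaGen r
  | b : Fin (r + 5) → GaGen r
  | c : Fin (r + 5) → GaGen r
  | d : Fin (r + 5) → GaGen r
  | p : Fin (r + 5) → Fin 5 → GaGen r
  | f : Fin 3 → GaGen r
  | g : Fin 3 → GaGen r
  | m : Fin 3 → GaGen r
  | h : {t : ℕ × ℕ × ℕ // t ∈ Cset r} → GaGen r
  | q : {t : ℕ × ℕ × ℕ // t ∈ Cset r} → Fin 6 → GaGen r
  | J : GaGen r

/-- The free-group letter `a_i` of `Γ` (`1 ≤ i ≤ r+5`; junk value `1` out of range). -/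
def ga (r : ℕ) (i : ℕ) : FreeGroup (GaGen r) :=
  if h : 1 ≤ i ∧ i ≤ r + 5 then FreeGroup.of (GaGen.a ⟨i - 1, by omega⟩) else 1

/-- The free-group letter `b_i` of `Γ`. -/
def gb (r : ℕ) (i : ℕ) : FreeGroup (GaGen r) :=
  if h : 1 ≤ i ∧ i ≤ r + 5 then FreeGroup.of (GaGen.b ⟨i - 1, by omega⟩) else 1

/-- The free-group letter `c_i` of `Γ`. -/
def gc (r : ℕ) (i : ℕ) : FreeGroup (GaGen r) :=
  if h : 1 ≤ i ∧ i ≤ r + 5 then FreeGroup.of (GaGen.c ⟨i - 1, by omega⟩) else 1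

/-- The free-group letter `d_i` of `Γ`. -/
def gd (r : ℕ) (i : ℕ) : FreeGroup (GaGen r) :=
  if h : 1 ≤ i ∧ i ≤ r + 5 then FreeGroup.of (GaGen.d ⟨i - 1, by omega⟩) else 1

/-- The free-group letter `p_{i,l}` of `Γ` (`1 ≤ i ≤ r+5`, `1 ≤ l ≤ 5`). -/
def gp (r : ℕ) (i l : ℕ) : FreeGroup (GaGen r) :=
  if h : (1 ≤ i ∧ i ≤ r + 5) ∧ (1 ≤ l ∧ l ≤ 5) then
    FreeGroup.of (GaGen.p ⟨i - 1, by omega⟩ ⟨l - 1, by omega⟩) else 1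

/-- The free-group letter `f_l` of `Γ` (`0 ≤ l ≤ 2`). -/
def gf (r : ℕ) (l : ℕ) : FreeGroup (GaGen r) :=
  if h : l ≤ 2 then FreeGroup.of (GaGen.f ⟨l, by omega⟩) else 1

/-- The free-group letter `g_l` of `Γ` (`0 ≤ l ≤ 2`). -/
def gg (r : ℕ) (l : ℕ) : FreeGroup (GaGen r) :=
  if h : l ≤ 2 then FreeGroup.of (GaGen.g ⟨l, by omega⟩) else 1

/-- The free-group letter `m_l` of `Γ` (`0 ≤ l ≤ 2`). -/
def gm (r : ℕ) (l : ℕ) : FreeGroup (GaGen r) :=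
  if h : l ≤ 2 then FreeGroup.of (GaGen.m ⟨l, by omega⟩) else 1

/-- The free-group letter `h_{jk}` of `Γ`, for `(i,j,k) ∈ C(r)`. -/
def gh (r : ℕ) (t : {t : ℕ × ℕ × ℕ // t ∈ Cset r}) : FreeGroup (GaGen r) :=
  FreeGroup.of (GaGen.h t)

/-- The free-group letter `q_{c,l}` of `Γ`, for `c ∈ C(r)` and `1 ≤ l ≤ 6`. -/
def gq (r : ℕ) (t : {t : ℕ × ℕ × ℕ // t ∈ Cset r}) (l : ℕ) : FreeGroup (GaGen r) :=
  if h : 1 ≤ l ∧ l ≤ 6 then FreeGroup.of (GaGen.q t ⟨l - 1, by omega⟩) else 1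

/-- The free-group letter `J` of `Γ`. -/
def gJ (r : ℕ) : FreeGroup (GaGen r) := FreeGroup.of GaGen.J

/-- The relators of `Γ` corresponding to the linear equations of the binary linear
system: for each `1 ≤ i ≤ r+5` the relations `a_i = b_i c_i`, `a_i = f₀ d_i`,
`f₀f₁f₂ = e`, `b_i f₂ p_{i,1} = e`, `p_{i,1}p_{i,2}p_{i,3} = e`, `f₀p_{i,3}p_{i,4} = e`,
`c_i p_{i,4} p_{i,5} = e`, `f₁ p_{i,2} p_{i,5} = e`; for each `c = (i,j,k) ∈ C(r)` the
relations `h_{jk} b_j c_k = e`, `d_i q_{c,1} f₂ = e`, `b_j f₂ q_{c,2} = e`,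
`q_{c,2}q_{c,3}q_{c,4} = e`, `d_i q_{c,4} q_{c,5} = e`, `c_k q_{c,5} q_{c,6} = e`,
`q_{c,1} q_{c,3} q_{c,6} = e`; and the Magic Square relations `g₀g₁g₂ = e`,
`m₀m₁m₂ = e`, `f₀g₂m₀ = e`, `f₂g₀m₁ = e`, `f₁g₁m₂ = J`. -/
def GaRelsLin (r : ℕ) : Set (FreeGroup (GaGen r)) :=
  (⋃ i ∈ Finset.Icc 1 (r + 5),
    ({gb r i * gc r i * (ga r i)⁻¹,
      gf r 0 * gd r i * (ga r i)⁻¹,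
      gf r 0 * gf r 1 * gf r 2,
      gb r i * gf r 2 * gp r i 1,
      gp r i 1 * gp r i 2 * gp r i 3,
      gf r 0 * gp r i 3 * gp r i 4,
      gc r i * gp r i 4 * gp r i 5,
      gf r 1 * gp r i 2 * gp r i 5} : Set (FreeGroup (GaGen r)))) ∪
  (⋃ t : {t : ℕ × ℕ × ℕ // t ∈ Cset r},
    ({gh r t * gb r t.1.2.1 * gc r t.1.2.2,
      gd r t.1.1 * gq r t 1 * gf r 2,
      gb r t.1.2.1 * gf r 2 * gq r t 2,
      gq r t 2 * gq r t 3 * gq r t 4,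
      gd r t.1.1 * gq r t 4 * gq r t 5,
      gc r t.1.2.2 * gq r t 5 * gq r t 6,
      gq r t 1 * gq r t 3 * gq r t 6} : Set (FreeGroup (GaGen r)))) ∪
  ({gg r 0 * gg r 1 * gg r 2,
    gm r 0 * gm r 1 * gm r 2,
    gf r 0 * gg r 2 * gm r 0,
    gf r 2 * gg r 0 * gm r 1,
    gf r 1 * gg r 1 * gm r 2 * (gJ r)⁻¹} : Set (FreeGroup (GaGen r)))

/-- All defining relations of `Γ`: `s² = e` for every generator (including `J² = e`),
`J s J s = e` for every generator `s ≠ J`, and the linear relators above. -/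
def GaRels (r : ℕ) : Set (FreeGroup (GaGen r)) :=
  (Set.range fun s : GaGen r => FreeGroup.of s * FreeGroup.of s) ∪
  ((fun s : GaGen r => gJ r * FreeGroup.of s * gJ r * FreeGroup.of s) ''
    {s : GaGen r | s ≠ GaGen.J}) ∪
  GaRelsLin r

/-- The solution group `Γ`, presented by the above generators and relations. -/
abbrev Ga (r : ℕ) : Type := PresentedGroup (GaRels r)


theorem fg_word {α : Type*} {L1 L2 : List (α × Bool)} (h1 : FreeGroup.IsReduced L1)
    (hl : L2.length ≤ L1.length) (h : FreeGroup.mk L1 = FreeGroup.mk L2) : L1 = L2 := by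
  classical
  have e : FreeGroup.reduce L1 = FreeGroup.reduce L2 := FreeGroup.reduce.sound h
  rw [h1.reduce_eq] at e
  have hs : L1.Sublist L2 := by
    rw [e]; exact (FreeGroup.reduce.red).sublist
  exact hs.eq_of_length_le hl

/-- BS -/
def aff (s : ℚ) (t : ℚ) (hs : s ≠ 0) : Equiv.Perm ℚ where
  toFun x := s * x + t
  invFun x := s⁻¹ * (x - t)
  left_inv x := by field_simp; ring
  right_inv x := by field_simp; ring

theorem bs_form (r : ℕ) (w : Pgrp r) : ∃ (m n : ℕ) (k : ℤ),
    w = ((PresentedGroup.of PGen.u : Pgrp r) ^ m)⁻¹ * PresentedGroup.of PGen.o ^ k *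
      PresentedGroup.of PGen.u ^ n := by
  set u : Pgrp r := PresentedGroup.of PGen.u with hu
  set o : Pgrp r := PresentedGroup.of PGen.o with ho
  have rel : u * o * u⁻¹ = o ^ r := by
    have := PresentedGroup.one_of_mem (rels := PRels r) (x := _) rfl
    simp only [map_mul, map_inv, map_pow] at this
    exact mul_inv_eq_one.mp this
  have relz : ∀ k : ℤ, u * o ^ k = o ^ (r * k) * u := by
    intro k
    have : (u * o * u⁻¹) ^ k = u * o ^ k * u⁻¹ := by
      rw [conj_zpow]
    rw [rel] at this
    rw [zpow_mul, zpow_natCast, this]; group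
  have relm : ∀ (m : ℕ) (k : ℤ), o ^ k * (u ^ m)⁻¹ = (u ^ m)⁻¹ * o ^ ((r : ℤ) ^ m * k) := by
    intro m k
    have : u ^ m * o ^ k = o ^ ((r:ℤ) ^ m * k) * u ^ m := by
      induction m with
      | zero => simp
      | succ m ih =>
        rw [pow_succ', mul_assoc, ih, ← mul_assoc, relz, mul_assoc, ← pow_succ']
        congr 2; ring
    rw [eq_inv_mul_iff_mul_eq, ← mul_assoc, this]; group
  have key : ∀ v : Pgrp r, ∀ w : Pgrp r, (∃ (m n : ℕ) (k : ℤ), w = (u ^ m)⁻¹ * o ^ k * u ^ n) →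
      ∃ (m n : ℕ) (k : ℤ), v * w = (u ^ m)⁻¹ * o ^ k * u ^ n := by
    intro v
    have hv : v ∈ Subgroup.closure (Set.range (PresentedGroup.of (rels := PRels r))) := by
      rw [PresentedGroup.closure_range_of]; trivial
    induction hv using Subgroup.closure_induction'' with
    | mem x hx =>
      rintro w ⟨m, n, k, rfl⟩
      obtain ⟨g, rfl⟩ := hx
      cases g with
      | u =>
        cases m with
        | zero => exact ⟨0, n + 1, r * k, by
            rw [← hu]
            simp only [pow_zero, inv_one, one_mul]
            rw [← mul_assoc, relz, pow_succ', mul_assoc]⟩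
        | succ m => exact ⟨m, n, k, by rw [← hu, pow_succ]; group⟩
      | o =>
        refine ⟨m, n, (r : ℤ) ^ m + k, ?_⟩
        have := relm m 1
        rw [zpow_one, mul_one] at this
        rw [← ho, mul_assoc, ← mul_assoc o, this, zpow_add]; group
    | inv_mem x hx =>
      rintro w ⟨m, n, k, rfl⟩
      obtain ⟨g, rfl⟩ := hx
      cases g with
      | u => exact ⟨m + 1, n, k, by rw [← hu, pow_succ]; group⟩
      | o =>
        refine ⟨m, n, -(r : ℤ) ^ m + k, ?_⟩
        have := relm m (-1)
        rw [zpow_neg_one] at this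
        rw [← ho, mul_assoc, ← mul_assoc o⁻¹, this, zpow_add]; group
    | one => intro w h; simpa using h
    | mul x y hx hy h1 h2 =>
      intro w h
      rw [mul_assoc]; exact h1 _ (h2 _ h)
  simpa using key w 1 ⟨0, 0, 0, by simp⟩

theorem bs_inj (r : ℕ) (hr : 2 ≤ r) (ρ : Pgrp r →* Equiv.Perm ℚ)
    (hu : ∀ x, ρ (PresentedGroup.of PGen.u) x = r * x)
    (ho : ∀ x, ρ (PresentedGroup.of PGen.o) x = x + 1) : Function.Injective ρ := by
  rw [injective_iff_map_eq_one]
  intro w hw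
  obtain ⟨m, n, k, rfl⟩ := bs_form r w
  have hr0 : (r : ℚ) ≠ 0 := by positivity
  simp only [map_mul, map_inv, map_pow, map_zpow] at hw
  set U := ρ (PresentedGroup.of PGen.u)
  set O := ρ (PresentedGroup.of PGen.o)
  have hU : ∀ (n : ℕ) x, (U ^ n) x = r ^ n * x := by
    intro n x
    induction n with
    | zero => simp
    | succ n ih => rw [pow_succ', Equiv.Perm.mul_apply, ih, hu]; ring
  have hO1 : ∀ (n : ℕ) x, (O ^ n) x = x + n := by
    intro n x
    induction n with
    | zero => simp
    | succ n ih => rw [pow_succ', Equiv.Perm.mul_apply, ih, ho]; push_cast; ring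
  have hO : ∀ (k : ℤ) x, (O ^ k) x = x + k := by
    intro k x
    obtain ⟨n, rfl | rfl⟩ := k.eq_nat_or_neg
    · simpa using hO1 n x
    · rw [zpow_neg, Equiv.Perm.inv_eq_iff_eq, zpow_natCast, hO1]; push_cast; ring
  have h2 : O ^ k * U ^ n = U ^ m := by
    rw [mul_assoc, inv_mul_eq_one] at hw
    exact hw.symm
  have h3 : ∀ x : ℚ, (r : ℚ) ^ n * x + k = r ^ m * x := by
    intro x
    rw [← hU, ← hU, ← hO, ← h2, Equiv.Perm.mul_apply]
  have hk : k = 0 := by have := h3 0; simpa using this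
  subst hk
  have hnm : n = m := by
    have := h3 1
    simp only [mul_one, Int.cast_zero, add_zero] at this
    have h4 : r ^ n = r ^ m := by exact_mod_cast this
    exact Nat.pow_right_injective hr h4
  subst hnm
  simp

set_option linter.unusedVariables false

theorem grp_bc {G : Type*} [Group G] {f0 f1 f2 b c p1 p2 p3 p4 p5 : G}
    (s3 : p3 * p3 = 1) (sf0 : f0 * f0 = 1) (sf1 : f1 * f1 = 1) (sf2 : f2 * f2 = 1)
    (sb : b * b = 1) (sc : c * c = 1) (s1 : p1 * p1 = 1) (s2 : p2 * p2 = 1)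
    (s4 : p4 * p4 = 1) (s5 : p5 * p5 = 1)
    (hf : f0 * f1 * f2 = 1) (h1 : b * f2 * p1 = 1) (h2 : p1 * p2 * p3 = 1)
    (h3 : f0 * p3 * p4 = 1) (h4 : c * p4 * p5 = 1) (h5 : f1 * p2 * p5 = 1) :
    f0 * b * f0 = c := by
  have i : ∀ {x : G}, x * x = 1 → x⁻¹ = x := fun h => inv_eq_of_mul_eq_one_left h
  have e1 : p1 = b * f2 := by rw [← i s1]; exact inv_eq_of_mul_eq_one_left h1
  have e4 : p4 = f0 * p3 := by rw [← i s4]; exact inv_eq_of_mul_eq_one_left h3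
  have e5 : p5 = c * p4 := by rw [← i s5]; exact inv_eq_of_mul_eq_one_left h4
  have e5' : p5 = f1 * p2 := by rw [← i s5]; exact inv_eq_of_mul_eq_one_left h5
  have e2 : p2 = f1 * c * f0 * p3 := by
    calc p2 = f1 * f1 * p2 := by rw [sf1, one_mul]
      _ = f1 * (c * p4) := by rw [← e5, e5', mul_assoc]
      _ = _ := by rw [e4]; simp only [mul_assoc]
  have e6 : f2 = f0 * f1 := by rw [← i sf2]; exact inv_eq_of_mul_eq_one_left hf
  have e7 : b * f0 * c * f0 = 1 := by
    calc b * f0 * c * f0 = b * f0 * (f1 * f1) * c * f0 * (p3 * p3) := by simp [sf1, s3]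
      _ = b * (f0 * f1) * (f1 * c * f0 * p3) * p3 := by simp only [mul_assoc]
      _ = 1 := by rw [← e2, ← e6, ← e1, h2]
  calc f0 * b * f0 = f0 * b * f0 * (c * c) := by rw [sc, mul_one]
    _ = f0 * (b * f0 * c * f0) * f0 * c := by
        simp only [mul_assoc]
        rw [← mul_assoc f0 f0 c, sf0, one_mul]
    _ = c := by rw [e7, mul_one, sf0, one_mul]

theorem grp_q {G : Type*} [Group G] {f2 b c d q1 q2 q3 q4 q5 q6 : G}
    (sf2 : f2 * f2 = 1) (sd : d * d = 1)
    (sb : b * b = 1) (sc : c * c = 1) (s1 : q1 * q1 = 1) (s2 : q2 * q2 = 1)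
    (s3 : q3 * q3 = 1) (s4 : q4 * q4 = 1) (s5 : q5 * q5 = 1) (s6 : q6 * q6 = 1)
    (h1 : d * q1 * f2 = 1) (h2 : b * f2 * q2 = 1)
    (h3 : q2 * q3 * q4 = 1) (h4 : d * q4 * q5 = 1) (h5 : c * q5 * q6 = 1)
    (h6 : q1 * q3 * q6 = 1) : d * b * d = c := by
  have i : ∀ {x : G}, x * x = 1 → x⁻¹ = x := fun h => inv_eq_of_mul_eq_one_left h
  have j : ∀ {x y z : G}, x * x = 1 → y * y = 1 → z * z = 1 → x * y = z → z = y * x := by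
    intro x y z hx hy hz h
    rw [← i hz, ← h, mul_inv_rev, i hx, i hy]
  have e1 : f2 = d * q1 := by rw [← i sf2]; exact inv_eq_of_mul_eq_one_left h1
  have e1' : q1 = d * f2 := by rw [e1, ← mul_assoc, sd, one_mul]
  have e2 : q2 = b * f2 := by rw [← i s2]; exact inv_eq_of_mul_eq_one_left h2
  have e2' : q2 = f2 * b := j sb sf2 s2 e2.symm
  have e4 : q4 = q2 * q3 := by rw [← i s4]; exact inv_eq_of_mul_eq_one_left h3
  have e3 : q3 = q2 * q4 := by rw [e4, ← mul_assoc, s2, one_mul]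
  have e5 : q5 = q4 * d := by
    apply j sd s4 s5; symm; rw [← i s5]; exact inv_eq_of_mul_eq_one_left h4
  have e6 : q6 = q5 * c := by
    apply j sc s5 s6; symm; rw [← i s6]; exact inv_eq_of_mul_eq_one_left h5
  have : d * b * d * c = 1 := by
    calc d * b * d * c = d * (f2 * f2) * b * (q4 * q4) * d * c := by simp [sf2, s4]
      _ = (d * f2) * ((f2 * b) * q4) * (q4 * d * c) := by simp only [mul_assoc]
      _ = 1 := by rw [← e1', ← e2', ← e3, ← e5, ← e6, h6]
  rw [← i sc]; exact eq_inv_of_mul_eq_one_left this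

theorem grp_conj {G : Type*} [Group G] {f0 ai aj ak bj bk cj ck di : G}
    (sf0 : f0 * f0 = 1) (sdi : di * di = 1) (sai : ai * ai = 1) (saj : aj * aj = 1)
    (sak : ak * ak = 1)
    (sbj : bj * bj = 1) (sbk : bk * bk = 1) (scj : cj * cj = 1) (sck : ck * ck = 1)
    (hi : f0 * di = ai) (hj : bj * cj = aj) (hk : bk * ck = ak)
    (hcj : f0 * bj * f0 = cj) (hck : f0 * bk * f0 = ck) (hd : di * bj * di = ck) :
    ai * aj * ai = ak := by
  have i : ∀ {x : G}, x * x = 1 → x⁻¹ = x := fun h => inv_eq_of_mul_eq_one_left h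
  have j : ∀ {x y z : G}, x * x = 1 → y * y = 1 → z * z = 1 → x * y = z → z = y * x := by
    intro x y z hx hy hz h
    rw [← i hz, ← h, mul_inv_rev, i hx, i hy]
  have hi' := j sf0 sdi sai hi
  have hj' := j sbj scj saj hj
  have hk' := j sbk sck sak hk
  have hk2 : bk = f0 * ck * f0 := by
    rw [← hck]; simp only [mul_assoc]; rw [sf0, mul_one, ← mul_assoc, sf0, one_mul]
  have hcm : f0 * di = di * f0 := by rw [hi, hi']
  have hbk : di * cj * di = bk := by
    calc di * cj * di = (di * f0) * bj * (f0 * di) := by rw [← hcj]; simp only [mul_assoc]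
      _ = f0 * (di * bj * di) * f0 := by
          rw [show f0 * (di * bj * di) * f0 = (f0 * di) * bj * (di * f0) by simp only [mul_assoc],
            ← hcm]
      _ = bk := by rw [hd, hk2]
  have : di * aj * di = ak := by
    calc di * aj * di = di * (cj * (di * di) * bj) * di := by rw [sdi, mul_one, hj']
      _ = (di * cj * di) * (di * bj * di) := by simp only [mul_assoc]
      _ = ak := by rw [hd, hbk, hk]
  calc ai * aj * ai = f0 * (di * aj * di) * f0 := by
        rw [show f0 * (di * aj * di) * f0 = (f0 * di) * aj * (di * f0) by simp only [mul_assoc],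
          ← hcm, hi]
    _ = f0 * bk * (f0 * f0) * ck * f0 := by rw [this, ← hk, sf0]; simp only [mul_assoc, one_mul]
    _ = (f0 * bk * f0) * (f0 * ck * f0) := by simp only [mul_assoc]
    _ = ak := by rw [hck, ← hk2, hk']

abbrev gmk (r : ℕ) : FreeGroup (GaGen r) →* Ga r := PresentedGroup.mk (GaRels r)

theorem gsq (r : ℕ) (s : GaGen r) : gmk r (FreeGroup.of s) * gmk r (FreeGroup.of s) = 1 := by
  rw [← map_mul]
  exact PresentedGroup.one_of_mem (Or.inl (Or.inl ⟨s, rfl⟩))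

theorem glin {r : ℕ} {w : FreeGroup (GaGen r)} (h : w ∈ GaRelsLin r) : gmk r w = 1 :=
  PresentedGroup.one_of_mem (Or.inr h)

theorem ga_sq (r i : ℕ) : gmk r (ga r i) * gmk r (ga r i) = 1 := by
  unfold ga; split_ifs; exacts [gsq _ _, by simp]
theorem gb_sq (r i : ℕ) : gmk r (gb r i) * gmk r (gb r i) = 1 := by
  unfold gb; split_ifs; exacts [gsq _ _, by simp]
theorem gc_sq (r i : ℕ) : gmk r (gc r i) * gmk r (gc r i) = 1 := by
  unfold gc; split_ifs; exacts [gsq _ _, by simp]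
theorem gd_sq (r i : ℕ) : gmk r (gd r i) * gmk r (gd r i) = 1 := by
  unfold gd; split_ifs; exacts [gsq _ _, by simp]
theorem gp_sq (r i l : ℕ) : gmk r (gp r i l) * gmk r (gp r i l) = 1 := by
  unfold gp; split_ifs; exacts [gsq _ _, by simp]
theorem gf_sq (r i : ℕ) : gmk r (gf r i) * gmk r (gf r i) = 1 := by
  unfold gf; split_ifs; exacts [gsq _ _, by simp]
theorem gq_sq (r : ℕ) (t) (l : ℕ) : gmk r (gq r t l) * gmk r (gq r t l) = 1 := by
  unfold gq; split_ifs; exacts [gsq _ _, by simp]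

theorem ga_rel1 {r i : ℕ} (hi : 1 ≤ i ∧ i ≤ r + 5) :
    gmk r (gf r 0) * gmk r (gb r i) * gmk r (gf r 0) = gmk r (gc r i) ∧
    gmk r (gb r i) * gmk r (gc r i) = gmk r (ga r i) ∧
    gmk r (gf r 0) * gmk r (gd r i) = gmk r (ga r i) := by
  have key : ∀ w ∈ ({gb r i * gc r i * (ga r i)⁻¹,
      gf r 0 * gd r i * (ga r i)⁻¹,
      gf r 0 * gf r 1 * gf r 2,
      gb r i * gf r 2 * gp r i 1,
      gp r i 1 * gp r i 2 * gp r i 3,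
      gf r 0 * gp r i 3 * gp r i 4,
      gc r i * gp r i 4 * gp r i 5,
      gf r 1 * gp r i 2 * gp r i 5} : Set (FreeGroup (GaGen r))), gmk r w = 1 := by
    intro w hw
    apply glin
    left; left
    simp only [Set.mem_iUnion]
    exact ⟨i, Finset.mem_Icc.mpr hi, hw⟩
  simp only [Set.mem_insert_iff, Set.mem_singleton_iff, forall_eq_or_imp, forall_eq, map_mul,
    map_inv] at key
  obtain ⟨k1, k2, k3, k4, k5, k6, k7, k8⟩ := key
  refine ⟨grp_bc (gp_sq r i 3) (gf_sq r 0) (gf_sq r 1) (gf_sq r 2) (gb_sq r i) (gc_sq r i)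
    (gp_sq r i 1) (gp_sq r i 2) (gp_sq r i 4) (gp_sq r i 5) k3 k4 k5 k6 k7 k8,
    mul_inv_eq_one.mp k1, mul_inv_eq_one.mp k2⟩

theorem ga_rel2 {r : ℕ} (t : {t : ℕ × ℕ × ℕ // t ∈ Cset r}) :
    gmk r (gd r t.1.1) * gmk r (gb r t.1.2.1) * gmk r (gd r t.1.1) = gmk r (gc r t.1.2.2) := by
  have key : ∀ w ∈ ({gh r t * gb r t.1.2.1 * gc r t.1.2.2,
      gd r t.1.1 * gq r t 1 * gf r 2,
      gb r t.1.2.1 * gf r 2 * gq r t 2,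
      gq r t 2 * gq r t 3 * gq r t 4,
      gd r t.1.1 * gq r t 4 * gq r t 5,
      gc r t.1.2.2 * gq r t 5 * gq r t 6,
      gq r t 1 * gq r t 3 * gq r t 6} : Set (FreeGroup (GaGen r))), gmk r w = 1 := by
    intro w hw
    apply glin
    left; right
    simp only [Set.mem_iUnion]
    exact ⟨t, hw⟩
  simp only [Set.mem_insert_iff, Set.mem_singleton_iff, forall_eq_or_imp, forall_eq, map_mul,
    map_inv] at key
  obtain ⟨k1, k2, k3, k4, k5, k6, k7⟩ := key
  exact grp_q (gf_sq r 2) (gd_sq r _) (gb_sq r _) (gc_sq r _) (gq_sq r t 1) (gq_sq r t 2)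
    (gq_sq r t 3) (gq_sq r t 4) (gq_sq r t 5) (gq_sq r t 6) k2 k3 k4 k5 k6 k7

theorem ga_conj {r i j k : ℕ} (hi : 1 ≤ i ∧ i ≤ r + 5) (hj : 1 ≤ j ∧ j ≤ r + 5)
    (hk : 1 ≤ k ∧ k ≤ r + 5)
    (h : aW r i * aW r j * aW r i * (aW r k)⁻¹ ∈ P0RelsU r ∪ P0RelsO r) :
    gmk r (ga r i) * gmk r (ga r j) * gmk r (ga r i) = gmk r (ga r k) := by
  have h2 := ga_rel2 (r := r) ⟨(i, j, k), h⟩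
  obtain ⟨i1, i2, i3⟩ := ga_rel1 hi
  obtain ⟨j1, j2, j3⟩ := ga_rel1 hj
  obtain ⟨k1, k2, k3⟩ := ga_rel1 hk
  exact grp_conj (gf_sq r 0) (gd_sq r i) (ga_sq r i) (ga_sq r j) (ga_sq r k) (gb_sq r j)
    (gb_sq r k) (gc_sq r j) (gc_sq r k) i3 j2 k2 j1 k1 h2

/-- index of `o_k` -/
def oi (k : ℕ) : ℕ := if k ≤ 2 then k else k + 5

theorem aW_oi (r k : ℕ) : aW r (oi k) = oW r k := by
  unfold oi aW
  split_ifs with h1 h2 h3 <;> first | rfl | omega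

theorem aW_ui (r k : ℕ) (h : 1 ≤ k ∧ k ≤ 5) : aW r (k + 2) = uW r k := by
  unfold aW
  rw [if_neg (by omega), if_pos (by omega)]; rfl

theorem oi_rng {r k : ℕ} (hr : 2 ≤ r) (h : 1 ≤ k ∧ k ≤ r) : 1 ≤ oi k ∧ oi k ≤ r + 5 := by
  unfold oi; split_ifs <;> omega

theorem o_rel {r e j k : ℕ} (hr : 2 ≤ r) (he : 1 ≤ e ∧ e ≤ r) (hj : 1 ≤ j ∧ j ≤ r)
    (hk : 1 ≤ k ∧ k ≤ r) (h : oW r e * oW r j * oW r e * (oW r k)⁻¹ ∈ P0RelsO r) :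
    gmk r (ga r (oi e)) * gmk r (ga r (oi j)) * gmk r (ga r (oi e)) = gmk r (ga r (oi k)) := by
  apply ga_conj (oi_rng hr he) (oi_rng hr hj) (oi_rng hr hk)
  right
  simpa only [aW_oi] using h

theorem relO_even {r j : ℕ} (h : Even r) (hj : 1 ≤ j ∧ j ≤ r / 2 - 1) :
    oW r 1 * oW r (2 * j) * oW r 1 * (oW r (1 + 2 * j))⁻¹ ∈ P0RelsO r ∧
    oW r 2 * oW r (1 + 2 * j) * oW r 2 * (oW r (2 + 2 * j))⁻¹ ∈ P0RelsO r := by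
  unfold P0RelsO
  rw [if_pos h]
  simp only [Set.mem_iUnion]
  exact ⟨⟨j, Finset.mem_Icc.mpr hj, by simp⟩, ⟨j, Finset.mem_Icc.mpr hj, by simp⟩⟩

theorem relO_odd0 {r : ℕ} (h : ¬ Even r) :
    oW r 2 * oW r 1 * oW r 2 * (oW r 3)⁻¹ ∈ P0RelsO r := by
  unfold P0RelsO
  rw [if_neg h]
  left; rfl

theorem relO_odd {r j : ℕ} (h : ¬ Even r) (hj : 1 ≤ j ∧ j ≤ (r - 3) / 2) :
    oW r 1 * oW r (1 + 2 * j) * oW r 1 * (oW r (2 + 2 * j))⁻¹ ∈ P0RelsO r ∧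
    oW r 2 * oW r (2 + 2 * j) * oW r 2 * (oW r (3 + 2 * j))⁻¹ ∈ P0RelsO r := by
  unfold P0RelsO
  rw [if_neg h]
  constructor <;> right <;> simp only [Set.mem_iUnion] <;>
    exact ⟨j, Finset.mem_Icc.mpr hj, by simp⟩

/-- in a group: one double step -/
theorem dih_step {G : Type*} [Group G] {o1 o2 x y z : G} (s1 : o1 * o1 = 1) (s2 : o2 * o2 = 1)
    (n : ℕ) (hx : x = ((o1 * o2) ^ n)⁻¹ * o2) (hy : o1 * x * o1 = y) (hz : o2 * y * o2 = z) :
    z = ((o1 * o2) ^ (n + 2))⁻¹ * o2 := by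
  have i1 : o1⁻¹ = o1 := inv_eq_of_mul_eq_one_left s1
  have i2 : o2⁻¹ = o2 := inv_eq_of_mul_eq_one_left s2
  have e : (o1 * o2)⁻¹ = o2 * o1 := by rw [mul_inv_rev, i1, i2]
  rw [← hz, ← hy, hx, ← inv_pow, ← inv_pow, e, pow_succ, pow_succ']
  rw [(show o2 * o1 * (o2 * o1) ^ n = (o2 * o1) ^ n * (o2 * o1) by
    rw [← pow_succ', ← pow_succ])]
  have : o2 * (o1 * ((o2 * o1) ^ n * o2) * o1) * o2 = (o2 * o1 * (o2 * o1) ^ n) * (o2 * o1) * o2 := by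
    simp only [mul_assoc]
  rw [this, ← pow_succ', ← pow_succ, ← pow_succ, ← pow_succ]

theorem o_last {r : ℕ} (hr : 2 ≤ r) : gmk r (ga r (oi r)) =
    ((gmk r (ga r (oi 1)) * gmk r (ga r (oi 2))) ^ (r - 2))⁻¹ * gmk r (ga r (oi 2)) := by
  have s1 := ga_sq r (oi 1)
  have s2 := ga_sq r (oi 2)
  by_cases h : Even r
  · have key : ∀ m, m ≤ r / 2 - 1 → gmk r (ga r (oi (2 + 2 * m))) =
      ((gmk r (ga r (oi 1)) * gmk r (ga r (oi 2))) ^ (2 * m))⁻¹ * gmk r (ga r (oi 2)) := by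
      intro m
      induction m with
      | zero => intro _; simp
      | succ m ih =>
        intro hm
        obtain ⟨h1, h2⟩ := relO_even (j := m + 1) h ⟨by omega, by omega⟩
        have h1' := o_rel hr ⟨by omega, by omega⟩ ⟨by omega, by omega⟩ ⟨by omega, by omega⟩ h1
        have h2' := o_rel hr ⟨by omega, by omega⟩ ⟨by omega, by omega⟩ ⟨by omega, by omega⟩ h2
        have ih := ih (by omega)
        rw [show 2 + 2 * m = 2 * (m + 1) by ring] at ih
        exact dih_step s1 s2 _ ih h1' h2'
    obtain ⟨q, hq⟩ := h
    have := key (q - 1) (by omega)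
    rw [show 2 + 2 * (q - 1) = r by omega, show 2 * (q - 1) = r - 2 by omega] at this
    exact this
  · have hodd := Nat.not_even_iff_odd.mp h
    obtain ⟨q, hq⟩ := hodd
    have key : ∀ m, m ≤ (r - 3) / 2 → gmk r (ga r (oi (3 + 2 * m))) =
      ((gmk r (ga r (oi 1)) * gmk r (ga r (oi 2))) ^ (2 * m + 1))⁻¹ * gmk r (ga r (oi 2)) := by
      intro m
      induction m with
      | zero =>
        intro _
        have h0 := o_rel hr ⟨by omega, by omega⟩ ⟨by omega, by omega⟩ ⟨by omega, by omega⟩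
          (relO_odd0 h)
        simp only [mul_zero, add_zero, zero_add, pow_one]
        rw [← h0, mul_inv_rev, inv_eq_of_mul_eq_one_left s1, inv_eq_of_mul_eq_one_left s2]
      | succ m ih =>
        intro hm
        obtain ⟨h1, h2⟩ := relO_odd (j := m + 1) h ⟨by omega, by omega⟩
        have h1' := o_rel hr ⟨by omega, by omega⟩ ⟨by omega, by omega⟩ ⟨by omega, by omega⟩ h1
        have h2' := o_rel hr ⟨by omega, by omega⟩ ⟨by omega, by omega⟩ ⟨by omega, by omega⟩ h2
        have ih := ih (by omega)
        rw [show 3 + 2 * m = 1 + 2 * (m + 1) by ring] at ih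
        have := dih_step s1 s2 _ ih h1' h2'
        rw [this]; congr 2
    have := key (q - 1) (by omega)
    rw [show 3 + 2 * (q - 1) = r by omega, show 2 * (q - 1) + 1 = r - 2 by omega] at this
    exact this

theorem p_rel {r : ℕ} (hr : 2 ≤ r) :
    (gmk r (ga r 3) * gmk r (ga r 4)) * (gmk r (ga r 1) * gmk r (ga r 2)) *
      (gmk r (ga r 3) * gmk r (ga r 4))⁻¹ = (gmk r (ga r 1) * gmk r (ga r 2)) ^ r := by
  have a1 : aW r 1 = oW r 1 := aW_oi r 1
  have a2 : aW r 2 = oW r 2 := aW_oi r 2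
  have a3 : aW r 3 = uW r 1 := aW_ui r 1 (by omega)
  have a4 : aW r 4 = uW r 2 := aW_ui r 2 (by omega)
  have a5 : aW r 5 = uW r 3 := aW_ui r 3 (by omega)
  have a6 : aW r 6 = uW r 4 := aW_ui r 4 (by omega)
  have a7 : aW r 7 = uW r 5 := aW_ui r 5 (by omega)
  have hor := oi_rng hr (k := r) (by omega)
  have c1 : _ = gmk r (ga r 5) := ga_conj (i := 4) (j := 1) (by omega) (by omega) (by omega)
    (Or.inl (by rw [a4, a1, a5]; simp [P0RelsU]))
  have c2 : _ = gmk r (ga r 6) := ga_conj (i := 4) (j := 2) (by omega) (by omega) (by omega)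
    (Or.inl (by rw [a4, a2, a6]; simp [P0RelsU]))
  have c3 : _ = gmk r (ga r 7) := ga_conj (i := 3) (j := 5) (by omega) (by omega) (by omega)
    (Or.inl (by rw [a3, a5, a7]; simp [P0RelsU]))
  have c4 : _ = gmk r (ga r 2) := ga_conj (i := 3) (j := 6) (by omega) (by omega) (by omega)
    (Or.inl (by rw [a3, a6, a2]; simp [P0RelsU]))
  have c5 : _ = gmk r (ga r 7) := ga_conj (i := 1) (j := oi r) (by omega) (by omega) (by omega)
    (Or.inl (by rw [a1, aW_oi, a7]; simp [P0RelsU]))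
  have hl := o_last hr
  simp only [show oi 1 = 1 from rfl, show oi 2 = 2 from rfl] at hl
  have s1 := ga_sq r 1
  have s2 := ga_sq r 2
  have s3 := ga_sq r 3
  have s4 := ga_sq r 4
  set x1 := gmk r (ga r 1)
  set x2 := gmk r (ga r 2)
  set x3 := gmk r (ga r 3)
  set x4 := gmk r (ga r 4)
  have i1 : x1⁻¹ = x1 := inv_eq_of_mul_eq_one_left s1
  have i2 : x2⁻¹ = x2 := inv_eq_of_mul_eq_one_left s2
  have i3 : x3⁻¹ = x3 := inv_eq_of_mul_eq_one_left s3
  have i4 : x4⁻¹ = x4 := inv_eq_of_mul_eq_one_left s4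
  have e1 : (x3 * x4) * x1 * (x3 * x4)⁻¹ = gmk r (ga r 7) := by
    rw [← c3, ← c1, mul_inv_rev, i3, i4]; simp only [mul_assoc]
  have e2 : (x3 * x4) * x2 * (x3 * x4)⁻¹ = x2 := by
    conv_rhs => rw [← c4, ← c2]
    rw [mul_inv_rev, i3, i4]; simp only [mul_assoc]
  obtain ⟨n, rfl⟩ : ∃ n, r = n + 2 := ⟨r - 2, by omega⟩
  rw [show n + 2 - 2 = n from rfl] at hl
  have e3 : ∀ n : ℕ, x1 * ((x1 * x2) ^ n)⁻¹ * x1 = (x2⁻¹ * x1⁻¹) ⁻¹ ^ n := by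
    intro n
    have : x1 * ((x1 * x2) ^ n)⁻¹ * x1⁻¹ = (x1 * (x1 * x2)⁻¹ * x1⁻¹) ^ n := by
      rw [conj_pow, inv_pow]
    rw [i1] at this
    rw [this, mul_inv_rev, i1, i2, mul_inv_rev, i1, i2]
    congr 1
    simp only [mul_assoc]; rw [s1, mul_one]
  calc _ = ((x3 * x4) * x1 * (x3 * x4)⁻¹) * ((x3 * x4) * x2 * (x3 * x4)⁻¹) := by group
    _ = x1 * (((x1 * x2) ^ n)⁻¹ * x2) * x1 * x2 := by rw [e1, e2, ← c5, hl]
    _ = (x1 * ((x1 * x2) ^ n)⁻¹ * x1) * (x1 * x2) * (x1 * x2) := by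
      simp only [mul_assoc]; rw [← mul_assoc x1 x1 _, s1, one_mul]
    _ = _ := by rw [e3]; simp only [mul_inv_rev, inv_inv]; rw [pow_succ, pow_succ]

set_option linter.unusedVariables false
set_option linter.unusedSimpArgs false
set_option linter.style.haveILetI false

theorem list_le_one {α : Type*} {l : List α} (h : l.length ≤ 1) : l = [] ∨ ∃ a, l = [a] := by
  match l, h with
  | [], _ => exact Or.inl rfl
  | [a], _ => exact Or.inr ⟨a, rfl⟩
  | a :: b :: t, h => simp at h

theorem word4 {α : Type*} {x y z : α} (hxz : x ≠ z) {l1 l2 l3 : List (α × Bool)}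
    (h1 : l1.length ≤ 1) (h2 : l2.length ≤ 1) (h3 : l3.length ≤ 1)
    (h : FreeGroup.of x * FreeGroup.of y * FreeGroup.of x * (FreeGroup.of z)⁻¹ =
      FreeGroup.mk l1 * FreeGroup.mk l2 * FreeGroup.mk l1 * (FreeGroup.mk l3)⁻¹) :
    l1 = [(x, true)] ∧ l2 = [(y, true)] ∧ l3 = [(z, true)] := by
  have h' : FreeGroup.mk [(x, true), (y, true), (x, true), (z, false)] =
      FreeGroup.mk (l1 ++ l2 ++ l1 ++ FreeGroup.invRev l3) := h
  have hl := fg_word (by simp [FreeGroup.IsReduced, hxz]) (by simp; omega) h'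
  rcases list_le_one h1 with rfl | ⟨⟨a, a'⟩, rfl⟩ <;> rcases list_le_one h2 with rfl | ⟨⟨b, b'⟩, rfl⟩ <;>
    rcases list_le_one h3 with rfl | ⟨⟨c, c'⟩, rfl⟩ <;>
    simp [FreeGroup.invRev] at hl ⊢
  obtain ⟨⟨rfl, rfl⟩, ⟨rfl, rfl⟩, _, rfl, rfl⟩ := hl
  simp

theorem aW_list (r i : ℕ) : ∃ l : List (P0Gen r × Bool), aW r i = FreeGroup.mk l ∧ l.length ≤ 1 := by
  unfold aW oW uW
  split_ifs
  all_goals first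
    | exact ⟨[], rfl, by simp⟩
    | exact ⟨[(_, true)], rfl, by simp⟩

theorem aW_gen {r i : ℕ} (hr : 2 ≤ r) (h : 1 ≤ i ∧ i ≤ r + 5) :
    ∃ g : P0Gen r, aW r i = FreeGroup.of g := by
  unfold aW oW uW
  split_ifs
  all_goals first
    | exact ⟨_, rfl⟩
    | omega

theorem aW_inj {r i j : ℕ} (hr : 2 ≤ r) (h : 1 ≤ i ∧ i ≤ r + 5) (e : aW r i = aW r j) : i = j := by
  unfold aW oW uW at e
  split_ifs at e
  all_goals first
    | omega
    | (have := FreeGroup.of_injective e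
       simp at this
       try omega)
    | (exact absurd e (FreeGroup.of_ne_one _))

abbrev relw (r : ℕ) (t : ℕ × ℕ × ℕ) : FreeGroup (P0Gen r) :=
  aW r t.1 * aW r t.2.1 * aW r t.1 * (aW r t.2.2)⁻¹

theorem relw_inj {r : ℕ} (hr : 2 ≤ r) {t t' : ℕ × ℕ × ℕ} (h1 : 1 ≤ t.1 ∧ t.1 ≤ r + 5)
    (h2 : 1 ≤ t.2.1 ∧ t.2.1 ≤ r + 5) (h3 : 1 ≤ t.2.2 ∧ t.2.2 ≤ r + 5) (hne : t.1 ≠ t.2.2)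
    (h : relw r t = relw r t') : t = t' := by
  obtain ⟨i, j, k⟩ := t
  obtain ⟨i', j', k'⟩ := t'
  unfold relw at h
  simp only at h h1 h2 h3 hne
  obtain ⟨x, hx⟩ := aW_gen hr h1
  obtain ⟨y, hy⟩ := aW_gen hr h2
  obtain ⟨z, hz⟩ := aW_gen hr h3
  obtain ⟨l1, e1, q1⟩ := aW_list r i'
  obtain ⟨l2, e2, q2⟩ := aW_list r j'
  obtain ⟨l3, e3, q3⟩ := aW_list r k'
  have hxz : x ≠ z := by
    rintro rfl
    exact hne (aW_inj hr h1 (hx.trans hz.symm))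
  rw [hx, hy, hz, e1, e2, e3] at h
  obtain ⟨rfl, rfl, rfl⟩ := word4 hxz q1 q2 q3 h
  rw [aW_inj hr h1 (hx.trans e1.symm), aW_inj hr h2 (hy.trans e2.symm),
    aW_inj hr h3 (hz.trans e3.symm)]

/-- enumeration of `Cset` -/
def TT (r n : ℕ) : ℕ × ℕ × ℕ :=
  if n = 0 then (4, 1, 5) else if n = 1 then (4, 2, 6) else if n = 2 then (3, 5, 7)
  else if n = 3 then (3, 6, 2) else if n = 4 then (1, oi r, 7)
  else (if (n - 2) % 2 = r % 2 then 2 else 1, oi (if r % 2 = 1 ∧ n = 5 then 1 else n - 3), oi (n - 2))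

theorem TT_rng {r n : ℕ} (hr : 2 ≤ r) (hn : n < r + 3) :
    (1 ≤ (TT r n).1 ∧ (TT r n).1 ≤ r + 5) ∧ (1 ≤ (TT r n).2.1 ∧ (TT r n).2.1 ≤ r + 5) ∧
    (1 ≤ (TT r n).2.2 ∧ (TT r n).2.2 ≤ r + 5) ∧ (TT r n).1 ≠ (TT r n).2.2 := by
  unfold TT oi
  split_ifs <;> simp only [true_and, and_true, ne_eq] <;> omega

theorem TT_inj {r n m : ℕ} (hr : 2 ≤ r) (hn : n < r + 3) (hm : m < r + 3) (h : TT r n = TT r m) :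
    n = m := by
  have h1 := congrArg Prod.fst h
  have h3 := congrArg (fun t => t.2.2) h
  clear h
  have hx : ∀ n, 5 ≤ n → (TT r n).2.2 = n + 3 := by
    intro n hn
    unfold TT oi
    rw [if_neg (by omega), if_neg (by omega), if_neg (by omega), if_neg (by omega),
      if_neg (by omega)]
    simp only
    split_ifs <;> omega
  have hy : ∀ n, n < 5 → n = 0 ∧ (TT r n).2.2 = 5 ∨ n = 1 ∧ (TT r n).2.2 = 6 ∨
    n = 2 ∧ (TT r n).2.2 = 7 ∧ (TT r n).1 = 3 ∨ n = 3 ∧ (TT r n).2.2 = 2 ∨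
    n = 4 ∧ (TT r n).2.2 = 7 ∧ (TT r n).1 = 1 := by
    intro n hn
    interval_cases n <;> simp [TT]
  rcases Nat.lt_or_ge n 5 with hn5 | hn5 <;> rcases Nat.lt_or_ge m 5 with hm5 | hm5
  · have := hy n hn5
    have := hy m hm5
    omega
  · have := hy n hn5
    have := hx m hm5
    omega
  · have := hx n hn5
    have := hy m hm5
    omega
  · have := hx n hn5
    have := hx m hm5
    omega

theorem TT_big {r n : ℕ} (hn : 5 ≤ n) : relw r (TT r n) =
    oW r (if (n - 2) % 2 = r % 2 then 2 else 1) * oW r (if r % 2 = 1 ∧ n = 5 then 1 else n - 3) *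
    oW r (if (n - 2) % 2 = r % 2 then 2 else 1) * (oW r (n - 2))⁻¹ := by
  unfold TT
  rw [if_neg (by omega), if_neg (by omega), if_neg (by omega), if_neg (by omega),
      if_neg (by omega)]
  unfold relw
  simp only [aW_oi]
  split_ifs
  · rw [show aW r 2 = oW r 2 from aW_oi r 2]
  · rw [show aW r 2 = oW r 2 from aW_oi r 2]
  · rw [show aW r 1 = oW r 1 from aW_oi r 1]
  · rw [show aW r 1 = oW r 1 from aW_oi r 1]

theorem relU_iff {r : ℕ} (w) : w ∈ P0RelsU r ↔ ∃ n < 5, w = relw r (TT r n) := by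
  have a1 : aW r 1 = oW r 1 := aW_oi r 1
  have a2 : aW r 2 = oW r 2 := aW_oi r 2
  have a3 : aW r 3 = uW r 1 := aW_ui r 1 (by omega)
  have a4 : aW r 4 = uW r 2 := aW_ui r 2 (by omega)
  have a5 : aW r 5 = uW r 3 := aW_ui r 3 (by omega)
  have a6 : aW r 6 = uW r 4 := aW_ui r 4 (by omega)
  have a7 : aW r 7 = uW r 5 := aW_ui r 5 (by omega)
  unfold P0RelsU
  simp only [Set.mem_insert_iff, Set.mem_singleton_iff]
  constructor
  · rintro (rfl | rfl | rfl | rfl | rfl)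
    · exact ⟨0, by omega, by simp [TT, relw, a1, a2, a3, a4, a5, a6, a7]⟩
    · exact ⟨1, by omega, by simp [TT, relw, a1, a2, a3, a4, a5, a6, a7]⟩
    · exact ⟨2, by omega, by simp [TT, relw, a1, a2, a3, a4, a5, a6, a7]⟩
    · exact ⟨3, by omega, by simp [TT, relw, a1, a2, a3, a4, a5, a6, a7]⟩
    · exact ⟨4, by omega, by simp [TT, relw, a1, a2, a3, a4, a5, a6, a7, aW_oi]⟩
  · rintro ⟨n, hn, rfl⟩
    interval_cases n <;> simp [TT, relw, a1, a2, a3, a4, a5, a6, a7, aW_oi]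

theorem relO_iff {r : ℕ} (hr : 2 ≤ r) (w) :
    w ∈ P0RelsO r ↔ ∃ n, 5 ≤ n ∧ n < r + 3 ∧ w = relw r (TT r n) := by
  constructor
  · intro h
    unfold P0RelsO at h
    split_ifs at h with he
    · simp only [Set.mem_iUnion, Finset.mem_Icc] at h
      obtain ⟨j, hj, rfl | rfl⟩ := h
      · refine ⟨2 * j + 3, by omega, by omega, ?_⟩
        have := Nat.even_iff.mp he
        rw [TT_big (by omega), if_neg (by omega), if_neg (by omega)]
        congr 3; omega
      · refine ⟨2 * j + 4, by omega, by omega, ?_⟩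
        have := Nat.even_iff.mp he
        rw [TT_big (by omega), if_pos (by omega), if_neg (by omega)]
        rw [show 2 * j + 4 - 3 = 1 + 2 * j by omega, show 2 * j + 4 - 2 = 2 + 2 * j by omega]
    · have := Nat.not_even_iff.mp he
      simp only [Set.mem_union, Set.mem_singleton_iff, Set.mem_iUnion, Finset.mem_Icc] at h
      obtain rfl | ⟨j, hj, rfl | rfl⟩ := h
      · refine ⟨5, by omega, by omega, ?_⟩
        rw [TT_big (by omega), if_pos (by omega), if_pos (by omega)]
      · refine ⟨2 * j + 4, by omega, by omega, ?_⟩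
        rw [TT_big (by omega), if_neg (by omega), if_neg (by omega)]
        rw [show 2 * j + 4 - 3 = 1 + 2 * j by omega, show 2 * j + 4 - 2 = 2 + 2 * j by omega]
      · refine ⟨2 * j + 5, by omega, by omega, ?_⟩
        rw [TT_big (by omega), if_pos (by omega), if_neg (by omega)]
        rw [show 2 * j + 5 - 3 = 2 + 2 * j by omega, show 2 * j + 5 - 2 = 3 + 2 * j by omega]
  · rintro ⟨n, h5, hn, rfl⟩
    rw [TT_big h5]
    by_cases he : Even r
    · have := Nat.even_iff.mp he
      rw [if_neg (show ¬ (r % 2 = 1 ∧ n = 5) by omega)]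
      obtain ⟨h1, h2⟩ := relO_even (j := (n - 3) / 2) he ⟨by omega, by omega⟩
      split_ifs with hp
      · convert h2 using 3 <;> congr 2 <;> omega
      · convert h1 using 3 <;> congr 2 <;> omega
    · have := Nat.not_even_iff.mp he
      by_cases h6 : n = 5
      · subst h6
        rw [if_pos (by omega), if_pos (by omega)]
        exact relO_odd0 he
      · rw [if_neg (show ¬ (r % 2 = 1 ∧ n = 5) by omega)]
        obtain ⟨h1, h2⟩ := relO_odd (j := (n - 4) / 2) he ⟨by omega, by omega⟩
        split_ifs with hp
        · convert h2 using 3 <;> congr 2 <;> omega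
        · convert h1 using 3 <;> congr 2 <;> omega

theorem Cset_iff {r : ℕ} (hr : 2 ≤ r) (t) : t ∈ Cset r ↔ ∃ n < r + 3, TT r n = t := by
  change relw r t ∈ P0RelsU r ∪ P0RelsO r ↔ _
  rw [Set.mem_union, relU_iff, relO_iff hr]
  constructor
  · intro h
    have : ∃ n < r + 3, relw r t = relw r (TT r n) := by
      obtain ⟨n, h, e⟩ | ⟨n, h, h', e⟩ := h
      · exact ⟨n, by omega, e⟩
      · exact ⟨n, by omega, e⟩
    obtain ⟨n, hn, e⟩ := this
    obtain ⟨h1, h2, h3, h4⟩ := TT_rng hr hn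
    exact ⟨n, hn, relw_inj hr h1 h2 h3 h4 e.symm⟩
  · rintro ⟨n, hn, rfl⟩
    rcases Nat.lt_or_ge n 5 with h | h
    · exact Or.inl ⟨n, h, rfl⟩
    · exact Or.inr ⟨n, h, hn, rfl⟩

abbrev CC (r : ℕ) := {t : ℕ × ℕ × ℕ // t ∈ Cset r}

theorem CC_equiv {r : ℕ} (hr : 2 ≤ r) : Nonempty (Fin (r + 3) ≃ CC r) := by
  refine ⟨Equiv.ofBijective (fun n => ⟨TT r n, (Cset_iff hr _).mpr ⟨n, n.2, rfl⟩⟩) ⟨?_, ?_⟩⟩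
  · intro n m h
    exact Fin.ext (TT_inj hr n.2 m.2 (congrArg Subtype.val h))
  · rintro ⟨t, ht⟩
    obtain ⟨n, hn, rfl⟩ := (Cset_iff hr t).mp ht
    exact ⟨⟨n, hn⟩, rfl⟩

theorem CC_rng {r : ℕ} (hr : 2 ≤ r) (t : CC r) : (1 ≤ t.1.1 ∧ t.1.1 ≤ r + 5) ∧
    (1 ≤ t.1.2.1 ∧ t.1.2.1 ≤ r + 5) ∧ (1 ≤ t.1.2.2 ∧ t.1.2.2 ≤ r + 5) := by
  obtain ⟨n, hn, e⟩ := (Cset_iff hr t.1).mp t.2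
  rw [← e]
  obtain ⟨h1, h2, h3, h4⟩ := TT_rng hr hn
  exact ⟨h1, h2, h3⟩

theorem card_gen {r : ℕ} (hr : 2 ≤ r) : Nat.card {s : GaGen r // s ≠ GaGen.J} = 16 * r + 75 := by
  obtain ⟨eC⟩ := CC_equiv hr
  let F : (Fin (r + 5) × Fin 9) ⊕ (Fin 3 × Fin 3) ⊕ (CC r × Fin 7) → {s : GaGen r // s ≠ GaGen.J} :=
    Sum.elim (fun x => ![⟨.a x.1, by simp⟩, ⟨.b x.1, by simp⟩, ⟨.c x.1, by simp⟩, ⟨.d x.1, by simp⟩,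
      ⟨.p x.1 0, by simp⟩, ⟨.p x.1 1, by simp⟩, ⟨.p x.1 2, by simp⟩, ⟨.p x.1 3, by simp⟩,
      ⟨.p x.1 4, by simp⟩] x.2)
      (Sum.elim (fun x => ![⟨.f x.1, by simp⟩, ⟨.g x.1, by simp⟩, ⟨.m x.1, by simp⟩] x.2)
      (fun x => ![⟨.h x.1, by simp⟩, ⟨.q x.1 0, by simp⟩, ⟨.q x.1 1, by simp⟩, ⟨.q x.1 2, by simp⟩,
       ⟨.q x.1 3, by simp⟩, ⟨.q x.1 4, by simp⟩, ⟨.q x.1 5, by simp⟩] x.2))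
  let Gi : GaGen r → Option ((Fin (r + 5) × Fin 9) ⊕ (Fin 3 × Fin 3) ⊕ (CC r × Fin 7)) := fun s =>
    match s with
    | .a i => some (.inl (i, 0))
    | .b i => some (.inl (i, 1))
    | .c i => some (.inl (i, 2))
    | .d i => some (.inl (i, 3))
    | .p i l => some (.inl (i, l.natAdd 4))
    | .f i => some (.inr (.inl (i, 0)))
    | .g i => some (.inr (.inl (i, 1)))
    | .m i => some (.inr (.inl (i, 2)))
    | .h t => some (.inr (.inr (t, 0)))
    | .q t l => some (.inr (.inr (t, l.succ)))
    | .J => none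
  have hl : ∀ x, Gi (F x).1 = some x := by
    rintro (⟨x, l⟩ | ⟨x, l⟩ | ⟨x, l⟩) <;> fin_cases l <;> rfl
  have hs : Function.Surjective F := by
    rintro ⟨s, hs⟩
    cases s with
    | a i => exact ⟨.inl (i, 0), rfl⟩
    | b i => exact ⟨.inl (i, 1), rfl⟩
    | c i => exact ⟨.inl (i, 2), rfl⟩
    | d i => exact ⟨.inl (i, 3), rfl⟩
    | p i l => exact ⟨.inl (i, l.natAdd 4), by fin_cases l <;> rfl⟩
    | f i => exact ⟨.inr (.inl (i, 0)), rfl⟩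
    | g i => exact ⟨.inr (.inl (i, 1)), rfl⟩
    | m i => exact ⟨.inr (.inl (i, 2)), rfl⟩
    | h t => exact ⟨.inr (.inr (t, 0)), rfl⟩
    | q t l => exact ⟨.inr (.inr (t, l.succ)), by fin_cases l <;> rfl⟩
    | J => exact absurd rfl hs
  have hi : Function.Injective F := by
    intro x y h
    have := hl x
    rw [h, hl y] at this
    exact (Option.some.inj this).symm
  haveI : Finite (CC r) := Finite.of_equiv _ eC
  rw [← Nat.card_congr (Equiv.ofBijective F ⟨hi, hs⟩)]
  simp only [Nat.card_sum, Nat.card_prod, Nat.card_fin,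
    ← Nat.card_congr eC]
  ring

set_option linter.unusedVariables false
set_option linter.unusedSimpArgs false

theorem ga_of {r : ℕ} (i : Fin (r + 5)) : ga r (i + 1) = FreeGroup.of (.a i) :=
  dif_pos ⟨by omega, by omega⟩
theorem gb_of {r : ℕ} (i : Fin (r + 5)) : gb r (i + 1) = FreeGroup.of (.b i) :=
  dif_pos ⟨by omega, by omega⟩
theorem gc_of {r : ℕ} (i : Fin (r + 5)) : gc r (i + 1) = FreeGroup.of (.c i) :=
  dif_pos ⟨by omega, by omega⟩
theorem gd_of {r : ℕ} (i : Fin (r + 5)) : gd r (i + 1) = FreeGroup.of (.d i) :=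
  dif_pos ⟨by omega, by omega⟩
theorem gp_of1 {r : ℕ} (i : Fin (r + 5)) : gp r (i + 1) 1 = FreeGroup.of (.p i 0) :=
  dif_pos ⟨⟨by omega, by omega⟩, by omega⟩
theorem gp_of2 {r : ℕ} (i : Fin (r + 5)) : gp r (i + 1) 2 = FreeGroup.of (.p i 1) :=
  dif_pos ⟨⟨by omega, by omega⟩, by omega⟩
theorem gp_of3 {r : ℕ} (i : Fin (r + 5)) : gp r (i + 1) 3 = FreeGroup.of (.p i 2) :=
  dif_pos ⟨⟨by omega, by omega⟩, by omega⟩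
theorem gp_of4 {r : ℕ} (i : Fin (r + 5)) : gp r (i + 1) 4 = FreeGroup.of (.p i 3) :=
  dif_pos ⟨⟨by omega, by omega⟩, by omega⟩
theorem gp_of5 {r : ℕ} (i : Fin (r + 5)) : gp r (i + 1) 5 = FreeGroup.of (.p i 4) :=
  dif_pos ⟨⟨by omega, by omega⟩, by omega⟩
theorem gq_of1 {r : ℕ} (t : CC r) : gq r t 1 = FreeGroup.of (.q t 0) := rfl
theorem gq_of2 {r : ℕ} (t : CC r) : gq r t 2 = FreeGroup.of (.q t 1) := rfl
theorem gq_of3 {r : ℕ} (t : CC r) : gq r t 3 = FreeGroup.of (.q t 2) := rfl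
theorem gq_of4 {r : ℕ} (t : CC r) : gq r t 4 = FreeGroup.of (.q t 3) := rfl
theorem gq_of5 {r : ℕ} (t : CC r) : gq r t 5 = FreeGroup.of (.q t 4) := rfl
theorem gq_of6 {r : ℕ} (t : CC r) : gq r t 6 = FreeGroup.of (.q t 5) := rfl

theorem CC_idx {r : ℕ} (hr : 2 ≤ r) (t : CC r) :
    ∃ i j k : Fin (r + 5), t.1 = (i.1 + 1, j.1 + 1, k.1 + 1) := by
  obtain ⟨h1, h2, h3⟩ := CC_rng hr t
  refine ⟨⟨t.1.1 - 1, by omega⟩, ⟨t.1.2.1 - 1, by omega⟩, ⟨t.1.2.2 - 1, by omega⟩, ?_⟩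
  ext <;> simp only <;> omega

abbrev Idx (r : ℕ) := (Fin (r + 5) × Fin 7) ⊕ (CC r × Fin 7) ⊕ Fin 6

def RR (r : ℕ) : Idx r → FreeGroup (GaGen r) :=
  Sum.elim (fun x =>
    ![gb r (x.1 + 1) * gc r (x.1 + 1) * (ga r (x.1 + 1))⁻¹,
      gf r 0 * gd r (x.1 + 1) * (ga r (x.1 + 1))⁻¹,
      gb r (x.1 + 1) * gf r 2 * gp r (x.1 + 1) 1,
      gp r (x.1 + 1) 1 * gp r (x.1 + 1) 2 * gp r (x.1 + 1) 3,
      gf r 0 * gp r (x.1 + 1) 3 * gp r (x.1 + 1) 4,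
      gc r (x.1 + 1) * gp r (x.1 + 1) 4 * gp r (x.1 + 1) 5,
      gf r 1 * gp r (x.1 + 1) 2 * gp r (x.1 + 1) 5] x.2)
  (Sum.elim (fun x =>
    ![gh r x.1 * gb r x.1.1.2.1 * gc r x.1.1.2.2,
      gd r x.1.1.1 * gq r x.1 1 * gf r 2,
      gb r x.1.1.2.1 * gf r 2 * gq r x.1 2,
      gq r x.1 2 * gq r x.1 3 * gq r x.1 4,
      gd r x.1.1.1 * gq r x.1 4 * gq r x.1 5,
      gc r x.1.1.2.2 * gq r x.1 5 * gq r x.1 6,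
      gq r x.1 1 * gq r x.1 3 * gq r x.1 6] x.2)
  (![gf r 0 * gf r 1 * gf r 2,
    gg r 0 * gg r 1 * gg r 2,
    gm r 0 * gm r 1 * gm r 2,
    gf r 0 * gg r 2 * gm r 0,
    gf r 2 * gg r 0 * gm r 1,
    gf r 1 * gg r 1 * gm r 2 * (gJ r)⁻¹]))

theorem RR_range (r : ℕ) : GaRelsLin r = Set.range (RR r) := by
  ext w
  constructor
  · rintro ((h | h) | h)
    · simp only [Set.mem_iUnion, Finset.mem_Icc] at h
      obtain ⟨i, hi, h⟩ := h
      obtain ⟨i, rfl⟩ : ∃ i', i = i' + 1 := ⟨i - 1, by omega⟩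
      obtain rfl | rfl | rfl | rfl | rfl | rfl | rfl | rfl := h
      · exact ⟨.inl (⟨i, by omega⟩, 0), rfl⟩
      · exact ⟨.inl (⟨i, by omega⟩, 1), rfl⟩
      · exact ⟨.inr (.inr 0), rfl⟩
      · exact ⟨.inl (⟨i, by omega⟩, 2), rfl⟩
      · exact ⟨.inl (⟨i, by omega⟩, 3), rfl⟩
      · exact ⟨.inl (⟨i, by omega⟩, 4), rfl⟩
      · exact ⟨.inl (⟨i, by omega⟩, 5), rfl⟩
      · exact ⟨.inl (⟨i, by omega⟩, 6), rfl⟩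
    · simp only [Set.mem_iUnion] at h
      obtain ⟨t, h⟩ := h
      obtain rfl | rfl | rfl | rfl | rfl | rfl | rfl := h
      · exact ⟨.inr (.inl (t, 0)), rfl⟩
      · exact ⟨.inr (.inl (t, 1)), rfl⟩
      · exact ⟨.inr (.inl (t, 2)), rfl⟩
      · exact ⟨.inr (.inl (t, 3)), rfl⟩
      · exact ⟨.inr (.inl (t, 4)), rfl⟩
      · exact ⟨.inr (.inl (t, 5)), rfl⟩
      · exact ⟨.inr (.inl (t, 6)), rfl⟩
    · obtain rfl | rfl | rfl | rfl | rfl := h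
      · exact ⟨.inr (.inr 1), rfl⟩
      · exact ⟨.inr (.inr 2), rfl⟩
      · exact ⟨.inr (.inr 3), rfl⟩
      · exact ⟨.inr (.inr 4), rfl⟩
      · exact ⟨.inr (.inr 5), rfl⟩
  · rintro ⟨⟨i, l⟩ | ⟨t, l⟩ | l, rfl⟩
    · left; left
      simp only [Set.mem_iUnion]
      refine ⟨i + 1, Finset.mem_Icc.mpr ⟨by omega, by omega⟩, ?_⟩
      fin_cases l <;> simp [RR]
    · left; right
      simp only [Set.mem_iUnion]
      refine ⟨t, ?_⟩
      fin_cases l <;> simp [RR]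
    · fin_cases l
      · left; left
        simp only [Set.mem_iUnion]
        exact ⟨1, Finset.mem_Icc.mpr ⟨by omega, by omega⟩, by simp [RR]⟩
      all_goals right; simp [RR]

def dec (r : ℕ) : List (GaGen r × Bool) → Option (Idx r)
  | [(.b i, _), (.c _, _), _] => some (.inl (i, 0))
  | [(.f _, _), (.d i, _), _] => some (.inl (i, 1))
  | [(.b i, _), (.f _, _), (.p _ _, _)] => some (.inl (i, 2))
  | [(.p i _, _), _, _] => some (.inl (i, 3))
  | [(.f l, _), (.p i _, _), _] => if l = 0 then some (.inl (i, 4)) else some (.inl (i, 6))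
  | [(.c i, _), (.p _ _, _), _] => some (.inl (i, 5))
  | [(.h t, _), _, _] => some (.inr (.inl (t, 0)))
  | [(.d _, _), (.q t _, _), (.f _, _)] => some (.inr (.inl (t, 1)))
  | [(.b _, _), (.f _, _), (.q t _, _)] => some (.inr (.inl (t, 2)))
  | [(.q t l, _), _, _] => if l = 1 then some (.inr (.inl (t, 3))) else some (.inr (.inl (t, 6)))
  | [(.d _, _), (.q t _, _), (.q _ _, _)] => some (.inr (.inl (t, 4)))
  | [(.c _, _), (.q t _, _), _] => some (.inr (.inl (t, 5)))
  | [(.f _, _), (.f _, _), _] => some (.inr (.inr 0))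
  | [(.g _, _), _, _] => some (.inr (.inr 1))
  | [(.m _, _), _, _] => some (.inr (.inr 2))
  | [(.f l, _), (.g _, _), _] => if l = 0 then some (.inr (.inr 3)) else some (.inr (.inr 4))
  | [_, _, _, _] => some (.inr (.inr 5))
  | _ => none

theorem RR_word {r : ℕ} (hr : 2 ≤ r) (x : Idx r) :
    ∃ L, RR r x = FreeGroup.mk L ∧ FreeGroup.IsReduced L ∧ dec r L = some x := by
  obtain ⟨i, l⟩ | ⟨t, l⟩ | l := x
  · fin_cases l <;> simp only [RR, Sum.elim_inl]
    · exact ⟨[(.b i, true), (.c i, true), (.a i, false)],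
        by simp [ga_of, gb_of, gc_of]; rfl, by simp [FreeGroup.IsReduced], rfl⟩
    · exact ⟨[(.f 0, true), (.d i, true), (.a i, false)],
        by simp [ga_of, gd_of]; rfl, by simp [FreeGroup.IsReduced], rfl⟩
    · exact ⟨[(.b i, true), (.f 2, true), (.p i 0, true)],
        by simp [gb_of, gp_of1]; rfl, by simp [FreeGroup.IsReduced], rfl⟩
    · exact ⟨[(.p i 0, true), (.p i 1, true), (.p i 2, true)],
        by simp [gp_of1, gp_of2, gp_of3]; rfl, by simp [FreeGroup.IsReduced], rfl⟩
    · exact ⟨[(.f 0, true), (.p i 2, true), (.p i 3, true)],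
        by simp [gp_of3, gp_of4]; rfl, by simp [FreeGroup.IsReduced], rfl⟩
    · exact ⟨[(.c i, true), (.p i 3, true), (.p i 4, true)],
        by simp [gc_of, gp_of4, gp_of5]; rfl, by simp [FreeGroup.IsReduced], rfl⟩
    · exact ⟨[(.f 1, true), (.p i 1, true), (.p i 4, true)],
        by simp [gp_of2, gp_of5]; rfl, by simp [FreeGroup.IsReduced], rfl⟩
  · obtain ⟨i, j, k, e⟩ := CC_idx hr t
    fin_cases l <;> simp only [RR, Sum.elim_inl, Sum.elim_inr, e]
    · exact ⟨[(.h t, true), (.b j, true), (.c k, true)],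
        by simp [gb_of, gc_of]; rfl, by simp [FreeGroup.IsReduced], rfl⟩
    · exact ⟨[(.d i, true), (.q t 0, true), (.f 2, true)],
        by simp [gd_of]; rfl, by simp [FreeGroup.IsReduced], rfl⟩
    · exact ⟨[(.b j, true), (.f 2, true), (.q t 1, true)],
        by simp [gb_of]; rfl, by simp [FreeGroup.IsReduced], rfl⟩
    · exact ⟨[(.q t 1, true), (.q t 2, true), (.q t 3, true)],
        by simp; rfl, by simp [FreeGroup.IsReduced], rfl⟩
    · exact ⟨[(.d i, true), (.q t 3, true), (.q t 4, true)],
        by simp [gd_of]; rfl, by simp [FreeGroup.IsReduced], rfl⟩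
    · exact ⟨[(.c k, true), (.q t 4, true), (.q t 5, true)],
        by simp [gc_of]; rfl, by simp [FreeGroup.IsReduced], rfl⟩
    · exact ⟨[(.q t 0, true), (.q t 2, true), (.q t 5, true)],
        by simp; rfl, by simp [FreeGroup.IsReduced], rfl⟩
  · fin_cases l <;> simp only [RR, Sum.elim_inr]
    · exact ⟨[(.f 0, true), (.f 1, true), (.f 2, true)], rfl, by simp [FreeGroup.IsReduced], rfl⟩
    · exact ⟨[(.g 0, true), (.g 1, true), (.g 2, true)], rfl, by simp [FreeGroup.IsReduced], rfl⟩
    · exact ⟨[(.m 0, true), (.m 1, true), (.m 2, true)], rfl, by simp [FreeGroup.IsReduced], rfl⟩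
    · exact ⟨[(.f 0, true), (.g 2, true), (.m 0, true)], rfl, by simp [FreeGroup.IsReduced], rfl⟩
    · exact ⟨[(.f 2, true), (.g 0, true), (.m 1, true)], rfl, by simp [FreeGroup.IsReduced], rfl⟩
    · exact ⟨[(.f 1, true), (.g 1, true), (.m 2, true), (.J, false)], rfl,
        by simp [FreeGroup.IsReduced], rfl⟩

theorem card_lin {r : ℕ} (hr : 2 ≤ r) : Nat.card ↥(GaRelsLin r) = 14 * r + 62 := by
  have hi : Function.Injective (RR r) := by
    intro x y h
    obtain ⟨L, h1, h2, h3⟩ := RR_word hr x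
    obtain ⟨M, k1, k2, k3⟩ := RR_word hr y
    have : FreeGroup.mk L = FreeGroup.mk M := by rw [← h1, ← k1, h]
    have e : L = M := by
      rcases Nat.le_total M.length L.length with hl | hl
      · exact fg_word h2 hl this
      · exact (fg_word k2 hl this.symm).symm
    subst e
    rw [h3] at k3
    exact Option.some.inj k3
  obtain ⟨eC⟩ := CC_equiv hr
  haveI : Finite (CC r) := Finite.of_equiv _ eC
  rw [RR_range, Nat.card_range_of_injective hi]
  simp only [Nat.card_sum, Nat.card_prod, Nat.card_fin, ← Nat.card_congr eC]
  ring

set_option linter.unusedVariables false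
set_option linter.unusedSimpArgs false

theorem ring_p {A : Type*} [Ring A] {P N E b c f z a : A}
    (hPN : P + N = 1) (hPP : P * P = P) (hNN : N * N = N) (hP0 : P * N = 0) (hN0 : N * P = 0)
    (EP : E * P = P * E) (EN : E * N = N * E) (EE : E * E = 1)
    (fP : f * P = P * f) (fN : f * N = N * f) (fE : f * E = E * f)
    (cP : c * P = P * c) (cN : c * N = N * c) (Pb : P * b = P * c) (Eb : E * b = c * E)
    (zP : z * P = P * z) (zN : z * N = N * z) (Ez : E * z = -(z * E))
    (aP : a * P = P) (aN : a * N = -N) :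
    (P + N * E) * (P + N * E) = 1 ∧ (P + N * E) * f = f * (P + N * E) ∧
    (P + N * E) * b = c * (P + N * E) ∧ (P + N * E) * z = a * z * (P + N * E) := by
  refine ⟨?_, ?_, ?_, ?_⟩
  · calc (P + N * E) * (P + N * E) = P * P + P * N * E + N * (E * P) + N * (E * N) * E := by
          noncomm_ring
      _ = P + (N * P) * E + (N * N) * (E * E) := by
          rw [hPP, hP0, EP, EN]; noncomm_ring
      _ = 1 := by rw [hN0, hNN, EE, zero_mul, add_zero, mul_one, hPN]
  · rw [add_mul, mul_add, fP, ← mul_assoc, fN, mul_assoc, mul_assoc, fE]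
  · rw [add_mul, mul_add, cP, ← mul_assoc, cN, mul_assoc, mul_assoc, Eb, Pb]
  · calc (P + N * E) * z = P * z + N * (E * z) := by noncomm_ring
      _ = z * P - z * N * E := by rw [Ez, zP, zN]; noncomm_ring
      _ = P * z - N * z * E := by rw [zP, zN]
      _ = a * P * z + a * N * z * E := by rw [aP, aN]; noncomm_ring
      _ = a * (P * z) + a * (N * z) * E := by noncomm_ring
      _ = _ := by rw [← zP, ← zN]; noncomm_ring

theorem ring_p2 {A : Type*} [Ring A] {h b c f z x : A} (hh : h + h = 1) (hc : ∀ y, h * y = y * h)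
    (bb : b * b = 1) (cc : c * c = 1) (ff : f * f = 1) (zz : z * z = 1) (xx : x * x = 1)
    (bc : b * c = c * b) (fb : f * b = c * f) (zb : z * b = b * z) (zc : z * c = c * z)
    (zf : z * f = f * z) (xb : x * b = b * x) (xc : x * c = c * x)
    (xf : x * f = f * x) (xz : x * z = -(z * x)) :
    ∃ p : A, p * p = 1 ∧ p * f = f * p ∧ p * b = c * p ∧ p * z = b * c * z * p := by
  have fc : f * c = b * f := by
    calc f * c = f * (c * f) * f := by rw [mul_assoc, mul_assoc, ff, mul_one]
      _ = f * (f * b) * f := by rw [fb]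
      _ = b * f := by rw [← mul_assoc, ff, one_mul]
  have aa : b * c * (b * c) = 1 := by
    calc b * c * (b * c) = b * (c * b) * c := by noncomm_ring
      _ = b * b * (c * c) := by rw [← bc]; noncomm_ring
      _ = 1 := by rw [bb, cc, mul_one]
  have cm : ∀ y : A, y * (b * c) = (b * c) * y →
      y * (h * (1 + b * c)) = h * (1 + b * c) * y ∧ y * (h * (1 - b * c)) = h * (1 - b * c) * y := by
    intro y hy
    constructor
    · rw [← mul_assoc, ← hc y, mul_assoc, mul_add, hy]; noncomm_ring
    · rw [← mul_assoc, ← hc y, mul_assoc, mul_sub, hy]; noncomm_ring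
  have fa : f * (b * c) = b * c * f := by
    rw [← mul_assoc, fb, mul_assoc, fc, ← mul_assoc, bc]
  have xa : x * (b * c) = b * c * x := by
    rw [← mul_assoc, xb, mul_assoc, xc, ← mul_assoc]
  have za : z * (b * c) = b * c * z := by
    rw [← mul_assoc, zb, mul_assoc, zc, ← mul_assoc]
  have ca : c * (b * c) = b * c * c := by rw [← mul_assoc, ← bc]
  have Ea : f * x * (b * c) = b * c * (f * x) := by
    rw [mul_assoc, xa, ← mul_assoc, fa, mul_assoc]
  have h4 : ∀ y : A, h * y + h * y = y := fun y => by rw [← add_mul, hh, one_mul]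
  have sq1 : (1 + b * c) * (1 + b * c) = (1 + b * c) + (1 + b * c) := by
    rw [add_mul, mul_add (b * c), aa]; noncomm_ring
  have sq2 : (1 - b * c) * (1 - b * c) = (1 - b * c) + (1 - b * c) := by
    rw [sub_mul, mul_sub (b * c), aa]; noncomm_ring
  have sq3 : (1 + b * c) * (1 - b * c) = 0 := by
    rw [add_mul, mul_sub (b * c), aa]; noncomm_ring
  have sq4 : (1 - b * c) * (1 + b * c) = 0 := by
    rw [sub_mul, mul_add (b * c), aa]; noncomm_ring
  have hm : ∀ y w : A, (h * y) * (h * w) = h * (h * (y * w)) := by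
    intro y w
    rw [mul_assoc, ← mul_assoc y, ← hc y]; noncomm_ring
  refine ⟨_, ring_p (P := h * (1 + b * c)) (N := h * (1 - b * c)) (E := f * x) (a := b * c)
    ?_ ?_ ?_ ?_ ?_ (cm _ Ea).1 (cm _ Ea).2 ?_ (cm _ fa).1 (cm _ fa).2 ?_ (cm _ ca).1 (cm _ ca).2
    ?_ ?_ (cm _ za).1 (cm _ za).2 ?_ ?_ ?_⟩
  · calc h * (1 + b * c) + h * (1 - b * c) = h + h := by noncomm_ring
      _ = 1 := hh
  · rw [hm, sq1, mul_add h (1 + b * c), h4]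
  · rw [hm, sq2, mul_add h (1 - b * c), h4]
  · rw [hm, sq3, mul_zero, mul_zero]
  · rw [hm, sq4, mul_zero, mul_zero]
  · calc f * x * (f * x) = f * (x * f) * x := by noncomm_ring
      _ = f * f * (x * x) := by rw [xf]; noncomm_ring
      _ = 1 := by rw [ff, xx, mul_one]
  · rw [mul_assoc, xf]
  · rw [mul_assoc, mul_assoc]
    congr 1
    rw [add_mul, add_mul, one_mul, one_mul, mul_assoc b c c, cc, mul_one, mul_assoc, ← bc,
      ← mul_assoc, bb, one_mul, add_comm]
  · rw [mul_assoc, xb, ← mul_assoc, fb, mul_assoc]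
  · rw [mul_assoc, xz, mul_neg, ← mul_assoc, ← mul_assoc, zf]
  · rw [← mul_assoc, ← hc, mul_assoc, mul_add, aa, mul_one, add_comm]
  · rw [← mul_assoc, ← hc, mul_assoc, mul_sub, aa, mul_one, ← mul_neg, neg_sub]

abbrev MM := Matrix (Fin 2) (Fin 2) ℚ
abbrev AA (W : Type) := MonoidAlgebra MM W
abbrev zm : MM := !![1, 0; 0, -1]
abbrev xm : MM := !![0, 1; 1, 0]
theorem zzm : zm * zm = 1 := by
  ext i j; fin_cases i <;> fin_cases j <;> simp [zm, Matrix.mul_apply, Fin.sum_univ_two]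
theorem xxm : xm * xm = 1 := by
  ext i j; fin_cases i <;> fin_cases j <;> simp [xm, Matrix.mul_apply, Fin.sum_univ_two]
theorem xzm : xm * zm = -(zm * xm) := by
  ext i j; fin_cases i <;> fin_cases j <;> simp [xm, zm, Matrix.mul_apply, Fin.sum_univ_two]

theorem K_exists (W : Type) [Group W] : ∃ (K : Type) (_ : Group K) (ι : W →* K) (z : K),
    Function.Injective ι ∧ z * z = 1 ∧ (∀ w, z * ι w = ι w * z) ∧
    ∀ b c f : W, b * b = 1 → c * c = 1 → f * f = 1 → b * c = c * b → f * b = c * f →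
      ∃ p : K, p * p = 1 ∧ p * ι f = ι f * p ∧ p * ι b = ι c * p ∧ p * z = ι (b * c) * z * p := by
  let Z : AA W := MonoidAlgebra.single 1 zm
  let X : AA W := MonoidAlgebra.single 1 xm
  have ZZ : Z * Z = 1 := by
    simp only [Z, MonoidAlgebra.single_mul_single, zzm, mul_one, MonoidAlgebra.one_def]
  have XX : X * X = 1 := by
    simp only [X, MonoidAlgebra.single_mul_single, xxm, mul_one, MonoidAlgebra.one_def]
  have XZ : X * Z = -(Z * X) := by
    simp only [X, Z, MonoidAlgebra.single_mul_single, xzm, mul_one]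
    exact MonoidAlgebra.single_neg _ _
  let ofW : W →* AA W := MonoidAlgebra.of MM W
  have hofW : ∀ w, ofW w = MonoidAlgebra.single w 1 := fun w => rfl
  have cmz : ∀ w, Z * ofW w = ofW w * Z := by
    intro w
    simp only [Z, hofW, MonoidAlgebra.single_mul_single, mul_one, one_mul]
  have cmx : ∀ w, X * ofW w = ofW w * X := by
    intro w
    simp only [X, hofW, MonoidAlgebra.single_mul_single, mul_one, one_mul]
  refine ⟨(AA W)ˣ, inferInstance, ofW.toHomUnits, ⟨Z, Z, ZZ, ZZ⟩, ?_, ?_, ?_, ?_⟩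
  · intro v w h
    have := congrArg Units.val h
    exact MonoidAlgebra.of_injective this
  · ext1; exact ZZ
  · intro w; ext1; exact cmz w
  · intro b c f bb cc ff bc fb
    have hh : ((1 / 2 : ℚ) • (1 : AA W)) + (1 / 2 : ℚ) • (1 : AA W) = 1 := by
      rw [← add_smul]; norm_num
    obtain ⟨p, h1, h2, h3, h4⟩ := ring_p2 (A := AA W) (h := (1 / 2 : ℚ) • (1 : AA W)) (b := ofW b)
      (c := ofW c) (f := ofW f) (z := Z) (x := X) hh
      (fun y => by rw [smul_mul_assoc, mul_smul_comm, one_mul, mul_one])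
      (by rw [← map_mul, bb, map_one]) (by rw [← map_mul, cc, map_one])
      (by rw [← map_mul, ff, map_one]) ZZ XX
      (by rw [← map_mul, bc, map_mul]) (by rw [← map_mul, fb, map_mul]) (cmz _) (cmz _) (cmz _)
      (cmx _) (cmx _) (cmx _) XZ
    refine ⟨⟨p, p, h1, h1⟩, ?_, ?_, ?_, ?_⟩
    · ext1; exact h1
    · ext1; exact h2
    · ext1; exact h3
    · ext1
      rw [← map_mul ofW] at h4
      exact h4

set_option linter.unusedVariables false
set_option linter.unusedSimpArgs false

abbrev QQ := Equiv.Perm (ℚ ⊕ ℚ)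

def refl1 (s : ℚ) : Equiv.Perm ℚ where
  toFun x := s - x
  invFun x := s - x
  left_inv x := by ring
  right_inv x := by ring

def Uq (r : ℕ) (hr : 2 ≤ r) : Equiv.Perm ℚ where
  toFun x := r * x
  invFun x := x / r
  left_inv x := by
    have : (r : ℚ) ≠ 0 := by positivity
    field_simp
  right_inv x := by
    have : (r : ℚ) ≠ 0 := by positivity
    field_simp

def sk (r k : ℕ) : ℚ := if k = 1 then 1 else if k = 2 ∨ k % 2 = r % 2 then 2 - k else k - 1

def eg (r : ℕ) (hr : 2 ≤ r) : P0Gen r → QQ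
  | .o k => Equiv.sumCongr (refl1 (sk r (k + 1))) 1
  | .u k => ![Equiv.sumCongr (Uq r hr) (Uq r hr)⁻¹ * Equiv.sumComm ℚ ℚ, Equiv.sumComm ℚ ℚ,
      Equiv.sumCongr 1 (refl1 1), Equiv.sumCongr 1 (refl1 0), Equiv.sumCongr (refl1 r) 1] k

def ee (r : ℕ) (hr : 2 ≤ r) : FreeGroup (P0Gen r) →* QQ := FreeGroup.lift (eg r hr)

theorem ee_o {r k : ℕ} (hr : 2 ≤ r) (h : 1 ≤ k ∧ k ≤ r) :
    ee r hr (oW r k) = Equiv.sumCongr (refl1 (sk r k)) 1 := by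
  obtain ⟨n, rfl⟩ : ∃ n, k = n + 1 := ⟨k - 1, by omega⟩
  simp only [oW, dif_pos h, ee, FreeGroup.lift_apply_of, eg, Nat.add_sub_cancel]

theorem ee_u {r k : ℕ} (hr : 2 ≤ r) (h : 1 ≤ k ∧ k ≤ 5) :
    ee r hr (uW r k) = eg r hr (.u ⟨k - 1, by omega⟩) := by
  simp only [uW, dif_pos h, ee, FreeGroup.lift_apply_of]

theorem eg_sq (r : ℕ) (hr : 2 ≤ r) (g : P0Gen r) : eg r hr g * eg r hr g = 1 := by
  have h0 : (r : ℚ) ≠ 0 := by positivity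
  rcases g with k | k
  · ext (x | x) <;> simp [eg, refl1]
  · fin_cases k <;> ext (x | x) <;> simp [eg, refl1, Uq, Equiv.Perm.inv_def] <;> field_simp

theorem ee_aW_sq (r : ℕ) (hr : 2 ≤ r) (i : ℕ) : ee r hr (aW r i) * ee r hr (aW r i) = 1 := by
  unfold aW oW uW
  split_ifs <;> simp [ee, eg_sq]

theorem ee_oo {r i j k : ℕ} (hr : 2 ≤ r) (hi : 1 ≤ i ∧ i ≤ r) (hj : 1 ≤ j ∧ j ≤ r)
    (hk : 1 ≤ k ∧ k ≤ r) (h : sk r k = 2 * sk r i - sk r j) :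
    ee r hr (oW r i * oW r j * oW r i * (oW r k)⁻¹) = 1 := by
  rw [map_mul, map_inv, mul_inv_eq_one, map_mul, map_mul, ee_o hr hi, ee_o hr hj, ee_o hr hk, h]
  ext (x | x) <;> simp [refl1]
  ring

theorem sk1 (r : ℕ) : sk r 1 = 1 := by simp [sk]
theorem sk2 (r : ℕ) : sk r 2 = 0 := by simp [sk]
theorem skr {r : ℕ} (hr : 2 ≤ r) : sk r r = 2 - r := by simp [sk]; omega
theorem ska {r k : ℕ} (hk : k % 2 = r % 2) : sk r k = 2 - k := by
  unfold sk; split_ifs with h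
  · subst h; norm_num
  · rfl
  · omega
theorem skb {r k : ℕ} (h2 : 2 < k) (hk : k % 2 ≠ r % 2) : sk r k = k - 1 := by
  unfold sk; split_ifs with h h
  · omega
  · omega
  · rfl

theorem ee_U {r : ℕ} (hr : 2 ≤ r) : ∀ w ∈ P0RelsU r, ee r hr w = 1 := by
  have h0 : (r : ℚ) ≠ 0 := by positivity
  intro w hw
  simp only [P0RelsU, Set.mem_insert_iff, Set.mem_singleton_iff] at hw
  have o1 := ee_o hr (k := 1) ⟨by omega, by omega⟩
  have o2 := ee_o hr (k := 2) ⟨by omega, by omega⟩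
  have o3 := ee_o hr (k := r) ⟨by omega, by omega⟩
  have u1 := ee_u hr (k := 1) (by omega)
  have u2 := ee_u hr (k := 2) (by omega)
  have u3 := ee_u hr (k := 3) (by omega)
  have u4 := ee_u hr (k := 4) (by omega)
  have u5 := ee_u hr (k := 5) (by omega)
  rw [sk1] at o1
  rw [sk2] at o2
  rw [skr hr] at o3
  rcases hw with rfl | rfl | rfl | rfl | rfl <;>
    rw [map_mul, map_inv, mul_inv_eq_one, map_mul, map_mul] <;>
    simp only [o1, o2, o3, u1, u2, u3, u4, u5, eg] <;>
    ext (x | x) <;> simp [refl1, Uq, Equiv.Perm.inv_def] <;> field_simp <;> ring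

theorem ee_O {r : ℕ} (hr : 2 ≤ r) : ∀ w ∈ P0RelsO r, ee r hr w = 1 := by
  intro w hw
  unfold P0RelsO at hw
  split_ifs at hw with h
  · rw [Nat.even_iff] at h
    simp only [Set.mem_iUnion, Finset.mem_Icc] at hw
    obtain ⟨j, hj, rfl | rfl⟩ := hw
    · refine ee_oo hr (by omega) (by omega) (by omega) ?_
      rw [sk1, ska (k := 2 * j) (by omega), skb (k := 1 + 2 * j) (by omega) (by omega)]
      push_cast; ring
    · refine ee_oo hr (by omega) (by omega) (by omega) ?_
      rw [sk2, ska (k := 2 + 2 * j) (by omega), skb (k := 1 + 2 * j) (by omega) (by omega)]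
      push_cast; ring
  · rw [Nat.even_iff] at h
    rcases hw with rfl | hw
    · refine ee_oo hr (by omega) (by omega) (by omega) ?_
      rw [sk2, sk1, ska (k := 3) (by omega)]; norm_num
    simp only [Set.mem_iUnion, Finset.mem_Icc] at hw
    obtain ⟨j, hj, rfl | rfl⟩ := hw
    · refine ee_oo hr (by omega) (by omega) (by omega) ?_
      rw [sk1, ska (k := 1 + 2 * j) (by omega), skb (k := 2 + 2 * j) (by omega) (by omega)]
      push_cast; ring
    · refine ee_oo hr (by omega) (by omega) (by omega) ?_
      rw [sk2, ska (k := 3 + 2 * j) (by omega), skb (k := 2 + 2 * j) (by omega) (by omega)]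
      push_cast; ring

theorem ee_conj {r : ℕ} (hr : 2 ≤ r) (t : CC r) :
    ee r hr (aW r t.1.1) * ee r hr (aW r t.1.2.1) * ee r hr (aW r t.1.1) =
      ee r hr (aW r t.1.2.2) := by
  have h : ee r hr (aW r t.1.1 * aW r t.1.2.1 * aW r t.1.1 * (aW r t.1.2.2)⁻¹) = 1 :=
    t.2.elim (ee_U hr _) (ee_O hr _)
  rwa [map_mul, map_inv, mul_inv_eq_one, map_mul, map_mul] at h

set_option linter.unusedVariables false
set_option linter.unusedSimpArgs false

theorem reas {K : Type*} [Group K] {x y w : K} (h : x * y = w) (t : K) :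
    x * (y * t) = w * t := by rw [← mul_assoc, h]

theorem pk {K : Type*} [Group K] {b c f z p : K} (bb : b * b = 1) (cc : c * c = 1)
    (ff : f * f = 1) (zz : z * z = 1) (pp : p * p = 1) (cb : c * b = b * c)
    (bz : b * z = z * b) (cz : c * z = z * c) (fz : f * z = z * f) (fb : f * b = c * f)
    (pf : p * f = f * p) (pb : p * b = c * p) (pz : p * z = b * c * z * p) :
    (b * z) * (b * z) = 1 ∧ (b * z * p) * (b * z * p) = 1 ∧ (f * p) * (f * p) = 1 ∧
    (c * (f * p)) * (c * (f * p)) = 1 ∧ (f * z) * (f * z) = 1 ∧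
    (f * z) * (b * z * p) * (c * (f * p)) = 1 := by
  have fc : f * c = b * f := by
    calc f * c = f * (c * f) * f := by rw [mul_assoc, mul_assoc, ff, mul_one]
      _ = f * (f * b) * f := by rw [fb]
      _ = b * f := by rw [← mul_assoc, ff, one_mul]
  have pc : p * c = b * p := by
    calc p * c = p * (c * p) * p := by rw [mul_assoc, mul_assoc, pp, mul_one]
      _ = p * (p * b) * p := by rw [pb]
      _ = b * p := by rw [← mul_assoc, pp, one_mul]
  have pz' : p * z = z * (b * (c * p)) := by
    rw [pz, mul_assoc b, cz, ← mul_assoc, bz]; simp only [mul_assoc]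
  refine ⟨?_, ?_, ?_, ?_, ?_, ?_⟩ <;>
    simp only [mul_assoc, bb, cc, ff, zz, pp, cb, bz, cz, fz, fb, pf, pb, pz', fc, pc,
      reas bb, reas cc, reas ff, reas zz, reas pp, reas cb, reas bz, reas cz, reas fz, reas fb,
      reas pf, reas pb, reas pz', reas fc, reas pc, one_mul, mul_one]

def Fg {r : ℕ} {K : Type} [Group K] (b c d p : Fin (r + 5) → K) (f0 z : K)
    (D B C P : CC r → K) : GaGen r → K
  | .a i => b i * c i
  | .b i => b i
  | .c i => c i
  | .d i => d i
  | .p i l => ![b i * z, b i * z * p i, p i, f0 * p i, c i * (f0 * p i)] l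
  | .f l => ![f0, f0 * z, z] l
  | .g _ => 1
  | .m l => ![f0, z, f0 * z] l
  | .h t => B t * C t
  | .q t l => ![D t * z, B t * z, B t * z * P t, P t, D t * P t, C t * (D t * P t)] l
  | .J => 1

theorem psi_gen {r : ℕ} (hr : 2 ≤ r) {K : Type} [Group K] (b c d p : Fin (r + 5) → K) (f0 z : K)
    (P : CC r → K) (zz : z * z = 1) (ff : f0 * f0 = 1) (fz : f0 * z = z * f0)
    (bb : ∀ i, b i * b i = 1) (cc : ∀ i, c i * c i = 1) (dd : ∀ i, d i * d i = 1)
    (bz : ∀ i, b i * z = z * b i) (cz : ∀ i, c i * z = z * c i) (dz : ∀ i, d i * z = z * d i)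
    (cb : ∀ i j, c i * b j = b j * c i) (fd : ∀ i, f0 * d i = b i * c i)
    (fb : ∀ i, f0 * b i = c i * f0)
    (pp : ∀ i, p i * p i = 1) (pf : ∀ i, p i * f0 = f0 * p i) (pb : ∀ i, p i * b i = c i * p i)
    (pz : ∀ i, p i * z = b i * c i * z * p i)
    (I J L : CC r → Fin (r + 5)) (hI : ∀ t : CC r, t.1 = ((I t).1 + 1, (J t).1 + 1, (L t).1 + 1))
    (db : ∀ t, d (I t) * b (J t) = c (L t) * d (I t))
    (PP : ∀ t, P t * P t = 1) (PD : ∀ t, P t * d (I t) = d (I t) * P t)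
    (Pb : ∀ t, P t * b (J t) = c (L t) * P t)
    (Pz : ∀ t, P t * z = b (J t) * c (L t) * z * P t) :
    ∃ ψ : Ga r →* K, ∀ i : Fin (r + 5), ψ (gmk r (ga r (i.1 + 1))) = b i * c i := by
  have k1 := fun i => pk (bb i) (cc i) ff zz (pp i) (cb i i) (bz i) (cz i) fz (fb i) (pf i) (pb i)
    (pz i)
  have k2 := fun t => pk (bb (J t)) (cc (L t)) (dd (I t)) zz (PP t) (cb _ _) (bz _) (cz _) (dz _)
    (db t) (PD t) (Pb t) (Pz t)
  have bc2 : ∀ i j, (b i * c j) * (b i * c j) = 1 := by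
    intro i j
    simp only [mul_assoc, reas (cb j i), cc, mul_one, bb]
  let F := Fg b c d p f0 z (fun t => d (I t)) (fun t => b (J t)) (fun t => c (L t)) P
  have sq : ∀ s, F s * F s = 1 := by
    intro s
    rcases s with i | i | i | i | ⟨i, l⟩ | l | l | l | t | ⟨t, l⟩ | _
    · exact bc2 _ _
    · exact bb _
    · exact cc _
    · exact dd _
    · fin_cases l
      exacts [(k1 i).1, (k1 i).2.1, pp i, (k1 i).2.2.1, (k1 i).2.2.2.1]
    · fin_cases l
      · exact ff
      · show f0 * z * (f0 * z) = 1
        exact (k1 0).2.2.2.2.1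
      · exact zz
    · exact one_mul _
    · fin_cases l
      · exact ff
      · exact zz
      · show f0 * z * (f0 * z) = 1
        exact (k1 0).2.2.2.2.1
    · exact bc2 _ _
    · fin_cases l
      exacts [(k2 t).2.2.2.2.1, (k2 t).1, (k2 t).2.1, PP t, (k2 t).2.2.1, (k2 t).2.2.2.1]
    · exact one_mul _
  have hrel : ∀ w ∈ GaRels r, FreeGroup.lift F w = 1 := by
    rintro w ((⟨s, rfl⟩ | ⟨s, -, rfl⟩) | hw)
    · simp only [map_mul, FreeGroup.lift_apply_of, sq]
    · simp only [map_mul, gJ, FreeGroup.lift_apply_of]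
      show 1 * F s * 1 * F s = 1
      rw [one_mul, mul_one, sq]
    · have f_0 : gf r 0 = FreeGroup.of (.f 0) := rfl
      have f_1 : gf r 1 = FreeGroup.of (.f 1) := rfl
      have f_2 : gf r 2 = FreeGroup.of (.f 2) := rfl
      have cr : ∀ x y w : K, w * w = 1 → x * y = w → x * y * w = 1 := by
        intro x y w h1 h2; rw [h2, h1]
      rcases hw with (hw | hw) | hw
      · simp only [Set.mem_iUnion, Finset.mem_Icc] at hw
        obtain ⟨n, hn, hw⟩ := hw
        obtain ⟨i, rfl⟩ : ∃ i : Fin (r + 5), n = i.1 + 1 := ⟨⟨n - 1, by omega⟩, by simp; omega⟩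
        simp only [Set.mem_insert_iff, Set.mem_singleton_iff, f_0, f_1, f_2, ga_of, gb_of, gc_of,
          gd_of, gp_of1, gp_of2, gp_of3, gp_of4, gp_of5] at hw
        rcases hw with rfl | rfl | rfl | rfl | rfl | rfl | rfl | rfl <;>
          simp only [map_mul, map_inv, FreeGroup.lift_apply_of]
        · show b i * c i * (b i * c i)⁻¹ = 1
          rw [mul_inv_cancel]
        · show f0 * d i * (b i * c i)⁻¹ = 1
          rw [fd, mul_inv_cancel]
        · show f0 * (f0 * z) * z = 1
          rw [reas ff, one_mul, zz]
        · exact (k1 i).1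
        · show b i * z * (b i * z * p i) * p i = 1
          rw [reas (k1 i).1, one_mul, pp]
        · exact (k1 i).2.2.1
        · exact (k1 i).2.2.2.1
        · exact (k1 i).2.2.2.2.2
      · simp only [Set.mem_iUnion] at hw
        obtain ⟨t, hw⟩ := hw
        have e1 : t.1.1 = (I t).1 + 1 := by rw [hI t]
        have e2 : t.1.2.1 = (J t).1 + 1 := by rw [hI t]
        have e3 : t.1.2.2 = (L t).1 + 1 := by rw [hI t]
        rw [e1, e2, e3] at hw
        simp only [Set.mem_insert_iff, Set.mem_singleton_iff, f_2, gb_of, gc_of, gd_of, gh,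
          gq_of1, gq_of2, gq_of3, gq_of4, gq_of5, gq_of6] at hw
        rcases hw with rfl | rfl | rfl | rfl | rfl | rfl | rfl <;>
          simp only [map_mul, map_inv, FreeGroup.lift_apply_of]
        · show b (J t) * c (L t) * b (J t) * c (L t) = 1
          rw [mul_assoc, bc2]
        · show d (I t) * (d (I t) * z) * z = 1
          rw [reas (dd _), one_mul, zz]
        · exact (k2 t).1
        · show b (J t) * z * (b (J t) * z * P t) * P t = 1
          rw [reas (k2 t).1, one_mul, PP]
        · exact (k2 t).2.2.1
        · exact (k2 t).2.2.2.1
        · exact (k2 t).2.2.2.2.2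
      · simp only [Set.mem_insert_iff, Set.mem_singleton_iff] at hw
        have g_0 : gg r 0 = FreeGroup.of (.g 0) := rfl
        have g_1 : gg r 1 = FreeGroup.of (.g 1) := rfl
        have g_2 : gg r 2 = FreeGroup.of (.g 2) := rfl
        have m_0 : gm r 0 = FreeGroup.of (.m 0) := rfl
        have m_1 : gm r 1 = FreeGroup.of (.m 1) := rfl
        have m_2 : gm r 2 = FreeGroup.of (.m 2) := rfl
        rcases hw with rfl | rfl | rfl | rfl | rfl <;>
          simp only [map_mul, map_inv, FreeGroup.lift_apply_of, f_0, f_1, f_2, g_0, g_1, g_2, m_0,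
            m_1, m_2, gJ]
        · show ((1 : K) * 1) * 1 = 1
          simp
        · show f0 * z * (f0 * z) = 1
          exact (k1 0).2.2.2.2.1
        · show f0 * 1 * f0 = 1
          rw [mul_one, ff]
        · show z * 1 * z = 1
          rw [mul_one, zz]
        · show f0 * z * 1 * (f0 * z) * 1⁻¹ = 1
          rw [mul_one, inv_one, mul_one]; exact (k1 0).2.2.2.2.1
  refine ⟨PresentedGroup.toGroup hrel, fun i => ?_⟩
  rw [ga_of]
  exact PresentedGroup.toGroup.of hrel

set_option linter.unusedVariables false
set_option linter.unusedSimpArgs false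

abbrev WW := Equiv.Perm ((ℚ ⊕ ℚ) ⊕ (ℚ ⊕ ℚ))
abbrev LL (a : QQ) : WW := Equiv.sumCongr a 1
abbrev RG (a : QQ) : WW := Equiv.sumCongr 1 a
abbrev FF : WW := Equiv.sumComm _ _
theorem LLm (a b : QQ) : LL a * LL b = LL (a * b) := by ext (x | x) <;> simp
theorem RGm (a b : QQ) : RG a * RG b = RG (a * b) := by ext (x | x) <;> simp
theorem LL1 : LL 1 = 1 := by ext (x | x) <;> simp
theorem RG1 : RG 1 = 1 := by ext (x | x) <;> simp
theorem LR (a b : QQ) : RG a * LL b = LL b * RG a := by ext (x | x) <;> simp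
theorem FL (a : QQ) : FF * LL a = RG a * FF := by ext (x | x) <;> simp
theorem FR (a : QQ) : FF * RG a = LL a * FF := by ext (x | x) <;> simp
theorem F1 : FF * FF = 1 := by ext (x | x) <;> simp

theorem psi_ex {r : ℕ} (hr : 2 ≤ r) : ∃ (K : Type) (_ : Group K) (ι : WW →* K),
    Function.Injective ι ∧ ∃ ψ : Ga r →* K, ∀ i : ℕ, 1 ≤ i ∧ i ≤ r + 5 →
      ψ (gmk r (ga r i)) = ι (LL (ee r hr (aW r i)) * RG (ee r hr (aW r i))) := by
  obtain ⟨K, _, ι, z, hι, zz, zc, hp⟩ := K_exists WW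
  refine ⟨K, _, ι, hι, ?_⟩
  let α : ℕ → QQ := fun i => ee r hr (aW r i)
  have aa : ∀ i, α i * α i = 1 := ee_aW_sq r hr
  let dw : ℕ → WW := fun i => FF * (LL (α i) * RG (α i))
  have dd : ∀ i, dw i * dw i = 1 := by
    intro i
    calc dw i * dw i = FF * LL (α i) * RG (α i) * FF * LL (α i) * RG (α i) := by
          simp only [dw, mul_assoc]
      _ = RG (α i) * FF * RG (α i) * FF * LL (α i) * RG (α i) := by rw [FL]
      _ = RG (α i) * (FF * RG (α i)) * FF * LL (α i) * RG (α i) := by simp only [mul_assoc]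
      _ = RG (α i) * LL (α i) * (FF * FF) * LL (α i) * RG (α i) := by
          rw [FR]; simp only [mul_assoc]
      _ = RG (α i) * (LL (α i) * LL (α i)) * RG (α i) := by
          rw [F1, mul_one]; simp only [mul_assoc]
      _ = 1 := by rw [LLm, aa, LL1, mul_one, RGm, aa, RG1]
  choose I J L hI using CC_idx hr
  have db : ∀ t, dw ((I t).1 + 1) * LL (α ((J t).1 + 1)) = RG (α ((L t).1 + 1)) * dw ((I t).1 + 1) := by
    intro t
    have h : α t.1.1 * α t.1.2.1 * α t.1.1 = α t.1.2.2 := ee_conj hr t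
    rw [hI t] at h
    simp only at h
    have h' : α ((I t).1 + 1) * α ((J t).1 + 1) = α ((L t).1 + 1) * α ((I t).1 + 1) := by
      rw [← h, mul_assoc _ _ (α ((I t).1 + 1)), aa, mul_one]
    simp only [dw]
    rw [← mul_assoc (RG _), ← FL, mul_assoc FF, mul_assoc FF, mul_assoc (LL _), LR,
      ← mul_assoc (LL _) (LL _), ← mul_assoc (LL _) (LL _), LLm, LLm, h']
  have La : ∀ i, LL (α i) * LL (α i) = 1 := fun i => by rw [LLm, aa, LL1]
  have Ra : ∀ i, RG (α i) * RG (α i) = 1 := fun i => by rw [RGm, aa, RG1]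
  choose p pp pf pb pz using fun i : Fin (r + 5) => hp (LL (α (i.1 + 1))) (RG (α (i.1 + 1))) FF
    (La _) (Ra _) F1 (LR _ _).symm (FL _)
  choose P PP PD Pb Pz using fun t : CC r => hp (LL (α ((J t).1 + 1))) (RG (α ((L t).1 + 1)))
    (dw ((I t).1 + 1)) (La _) (Ra _) (dd _) (LR _ _).symm (db t)
  obtain ⟨ψ, hψ⟩ := psi_gen hr (fun i => ι (LL (α (i.1 + 1)))) (fun i => ι (RG (α (i.1 + 1))))
    (fun i => ι (dw (i.1 + 1))) p (ι FF) z P zz (by rw [← map_mul, F1, map_one]) (zc _).symm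
    (fun i => by rw [← map_mul, La, map_one]) (fun i => by rw [← map_mul, Ra, map_one])
    (fun i => by rw [← map_mul, dd, map_one]) (fun i => (zc _).symm) (fun i => (zc _).symm)
    (fun i => (zc _).symm) (fun i j => by rw [← map_mul, LR, map_mul])
    (fun i => by rw [← map_mul, ← map_mul, ← mul_assoc FF, F1, one_mul])
    (fun i => by rw [← map_mul, FL, map_mul]) pp pf pb (fun i => by rw [pz, map_mul])
    I J L hI (fun t => by rw [← map_mul, db, map_mul]) PP PD Pb (fun t => by rw [Pz, map_mul])
  refine ⟨ψ, fun i hi => ?_⟩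
  have := hψ ⟨i - 1, by omega⟩
  simp only [show i - 1 + 1 = i by omega] at this
  rw [this, map_mul]

theorem sumCongr_inj {α β : Type*} {a a' : Equiv.Perm α} {b b' : Equiv.Perm β}
    (h : (Equiv.sumCongr a b : Equiv.Perm (α ⊕ β)) = Equiv.sumCongr a' b') : a = a' := by
  ext x
  simpa using congrArg (fun e : Equiv.Perm (α ⊕ β) => e (Sum.inl x)) h

theorem phi_ex {r : ℕ} (hr : 2 ≤ r) : ∃ φ : Pgrp r →* Ga r, Function.Injective φ ∧
      φ (PresentedGroup.of PGen.u) = PresentedGroup.mk (GaRels r) (ga r 3 * ga r 4) ∧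
      φ (PresentedGroup.of PGen.o) = PresentedGroup.mk (GaRels r) (ga r 1 * ga r 2) := by
  have h0 : (r : ℚ) ≠ 0 := by positivity
  have lf : ∀ {G : Type} [Group G] (F : PGen → G),
      F .u * F .o * (F .u)⁻¹ = F .o ^ r → ∀ w ∈ PRels r, FreeGroup.lift F w = 1 := by
    intro G _ F h w hw
    rw [PRels, Set.mem_singleton_iff] at hw
    subst hw
    simp only [map_mul, map_inv, map_pow, FreeGroup.lift_apply_of, h, mul_inv_cancel]
  let Fφ : PGen → Ga r := fun s => PGen.rec (gmk r (ga r 3) * gmk r (ga r 4))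
    (gmk r (ga r 1) * gmk r (ga r 2)) s
  let φ : Pgrp r →* Ga r := PresentedGroup.toGroup (lf Fφ (p_rel hr))
  have φu : φ (PresentedGroup.of PGen.u) = gmk r (ga r 3) * gmk r (ga r 4) :=
    PresentedGroup.toGroup.of _
  have φo : φ (PresentedGroup.of PGen.o) = gmk r (ga r 1) * gmk r (ga r 2) :=
    PresentedGroup.toGroup.of _
  let To : Equiv.Perm ℚ := Equiv.addRight 1
  have hTo : ∀ (n : ℕ) (x : ℚ), (To ^ n) x = x + n := by
    intro n
    induction n with
    | zero => intro x; simp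
    | succ n ih => intro x; rw [pow_succ, Equiv.Perm.mul_apply, ih]; simp [To]; ring
  let F1' : PGen → Equiv.Perm ℚ := fun s => PGen.rec (Uq r hr) To s
  have hF1 : F1' .u * F1' .o * (F1' .u)⁻¹ = F1' .o ^ r := by
    show Uq r hr * To * (Uq r hr)⁻¹ = To ^ r
    rw [mul_inv_eq_iff_eq_mul]
    ext x
    rw [Equiv.Perm.mul_apply, Equiv.Perm.mul_apply, hTo]
    simp [Uq, To]; ring
  let F2' : PGen → Equiv.Perm ℚ := fun s => PGen.rec (Uq r hr)⁻¹ 1 s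
  have hF2 : F2' .u * F2' .o * (F2' .u)⁻¹ = F2' .o ^ r := by
    show (Uq r hr)⁻¹ * 1 * ((Uq r hr)⁻¹)⁻¹ = 1 ^ r
    simp
  let ρ : Pgrp r →* Equiv.Perm ℚ := PresentedGroup.toGroup (lf F1' hF1)
  let ρ2 : Pgrp r →* Equiv.Perm ℚ := PresentedGroup.toGroup (lf F2' hF2)
  have ρu : ρ (PresentedGroup.of PGen.u) = Uq r hr := PresentedGroup.toGroup.of _
  have ρo : ρ (PresentedGroup.of PGen.o) = To := PresentedGroup.toGroup.of _
  have ρ2u : ρ2 (PresentedGroup.of PGen.u) = (Uq r hr)⁻¹ := PresentedGroup.toGroup.of _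
  have ρ2o : ρ2 (PresentedGroup.of PGen.o) = 1 := PresentedGroup.toGroup.of _
  let σ : Pgrp r →* QQ := (Equiv.Perm.sumCongrHom ℚ ℚ).comp (ρ.prod ρ2)
  have hσ : ∀ w, σ w = Equiv.sumCongr (ρ w) (ρ2 w) := fun w => rfl
  let τ : Pgrp r →* WW := (Equiv.Perm.sumCongrHom _ _).comp (σ.prod σ)
  have hτ : ∀ w, τ w = Equiv.sumCongr (σ w) (σ w) := fun w => rfl
  obtain ⟨K, _, ι, hι, ψ, hψ⟩ := psi_ex hr
  have LRs : ∀ a : QQ, LL a * RG a = Equiv.sumCongr a a := by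
    intro a; ext (x | x) <;> simp
  have smul : ∀ a b : QQ, (Equiv.sumCongr a a : WW) * Equiv.sumCongr b b
      = Equiv.sumCongr (a * b) (a * b) := by
    intro a b; ext (x | x) <;> simp
  have key : ψ.comp φ = ι.comp τ := by
    ext s
    rcases s with _ | _
    · show ψ (φ (PresentedGroup.of PGen.u)) = ι (τ (PresentedGroup.of PGen.u))
      rw [φu, map_mul, hψ 3 (by omega), hψ 4 (by omega), ← map_mul, LRs, LRs, smul, hτ]
      have : ee r hr (aW r 3) * ee r hr (aW r 4) = σ (PresentedGroup.of PGen.u) := by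
        rw [hσ, ρu, ρ2u, aW_ui r 1 (by omega), aW_ui r 2 (by omega), ee_u hr (by omega),
          ee_u hr (by omega)]
        ext (x | x) <;> simp [eg]
      rw [this]
    · show ψ (φ (PresentedGroup.of PGen.o)) = ι (τ (PresentedGroup.of PGen.o))
      rw [φo, map_mul, hψ 1 (by omega), hψ 2 (by omega), ← map_mul, LRs, LRs, smul, hτ]
      have : ee r hr (aW r 1) * ee r hr (aW r 2) = σ (PresentedGroup.of PGen.o) := by
        rw [hσ, ρo, ρ2o, show aW r 1 = oW r 1 from aW_oi r 1, show aW r 2 = oW r 2 from aW_oi r 2,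
          ee_o hr (by omega), ee_o hr (by omega), sk1, sk2]
        ext (x | x) <;> simp [refl1, To]
        ring
      rw [this]
  refine ⟨φ, ?_, ?_, ?_⟩
  · intro v w h
    have h1 : ψ.comp φ v = ψ.comp φ w := congrArg ψ h
    rw [key] at h1
    have h2 : τ v = τ w := hι h1
    rw [hτ, hτ] at h2
    have h3 := sumCongr_inj h2
    rw [hσ, hσ] at h3
    refine bs_inj r hr ρ ?_ ?_ (sumCongr_inj h3)
    · intro x; rw [ρu]; rfl
    · intro x; rw [ρo]; rfl
  · rw [φu, map_mul]
  · rw [φo, map_mul]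

/-- For every `r ≥ 2`, the group `𝒫 = ⟨u, o | u o u⁻¹ = o^r⟩` embeds
into the solution group `Γ` of a binary linear system with `16r + 75` variables (the
generators other than `J`) and `14r + 62` equations (the linear relators `GaRelsLin`, each
of which involves `3` variables): there is an injective group homomorphism `𝒫 → Γ`
mapping `u` to `a₃a₄` and `o` to `a₁a₂`. -/
theorem stmt_8 (r : ℕ) (hr : 2 ≤ r) :
    Nat.card {s : GaGen r // s ≠ GaGen.J} = 16 * r + 75 ∧
    Nat.card ↥(GaRelsLin r) = 14 * r + 62 ∧
    ∃ φ : Pgrp r →* Ga r, Function.Injective φ ∧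
      φ (PresentedGroup.of PGen.u) = PresentedGroup.mk (GaRels r) (ga r 3 * ga r 4) ∧
      φ (PresentedGroup.of PGen.o) = PresentedGroup.mk (GaRels r) (ga r 1 * ga r 2) := by
  exact ⟨card_gen hr, card_lin hr, phi_ex hr⟩
end

section
/- Let α be a real number with α ≥ 1 and μ = arctan(1/α). Then ⟨EPR| (α·M̃₁⊗Ñ₁ + α·M̃₁⊗Ñ₂ + M̃₂⊗Ñ₁ − M̃₂⊗Ñ₂) |EPR⟩ = 2√(1+α²), where M̃₁ = σ_z, M̃₂ = σ_x, Ñ₁ = cos(μ)σ_z + sin(μ)σ_x, Ñ₂ = cos(μ)σ_z − sin(μ)σ_x. -/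
open Matrix Kronecker

/-- The ideal strategy achieves the value `2√(1+α²)` of the α-weighted
CHSH Bell expression.  Here `σ_z`, `σ_x` are the Pauli matrices, `|EPR⟩ = (|00⟩+|11⟩)/√2`
is represented as the function `(i,j) ↦ if i = j then 1/√2 else 0` on `Fin 2 × Fin 2`, the
tensor product of operators is the Kronecker product, and `⟨ψ|T|ψ⟩ = (star ψ) ⬝ᵥ (T ψ)`. -/
theorem stmt_12 (α : ℝ) (hα : 1 ≤ α) (μ : ℝ) (hμ : μ = Real.arctan (1 / α))
    (σz σx : Matrix (Fin 2) (Fin 2) ℂ)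
    (hσz : σz = !![1, 0; 0, -1]) (hσx : σx = !![0, 1; 1, 0])
    (M₁ M₂ N₁ N₂ : Matrix (Fin 2) (Fin 2) ℂ)
    (hM₁ : M₁ = σz) (hM₂ : M₂ = σx)
    (hN₁ : N₁ = (Real.cos μ : ℂ) • σz + (Real.sin μ : ℂ) • σx)
    (hN₂ : N₂ = (Real.cos μ : ℂ) • σz - (Real.sin μ : ℂ) • σx)
    (EPR : Fin 2 × Fin 2 → ℂ)
    (hEPR : EPR = fun p => if p.1 = p.2 then ((Real.sqrt 2 : ℂ))⁻¹ else 0) :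
    star EPR ⬝ᵥ ((α : ℂ) • (M₁ ⊗ₖ N₁) + (α : ℂ) • (M₁ ⊗ₖ N₂) +
        M₂ ⊗ₖ N₁ - M₂ ⊗ₖ N₂).mulVec EPR
      = ((2 * Real.sqrt (1 + α ^ 2) : ℝ) : ℂ) := by
  have ha : 0 < α := by linarith
  have key : α * Real.cos μ + Real.sin μ = Real.sqrt (1 + α ^ 2) := by
    have hs : 0 < Real.sqrt (1 + (1 / α) ^ 2) := Real.sqrt_pos.mpr (by positivity)
    have h2 : Real.sqrt (1 + (1 / α) ^ 2) ^ 2 = 1 + (1 / α) ^ 2 :=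
      Real.sq_sqrt (by positivity)
    have h3 : Real.sqrt (1 + α ^ 2) = α * Real.sqrt (1 + (1 / α) ^ 2) := by
      rw [Real.sqrt_eq_iff_mul_self_eq (by positivity) (by positivity)]
      rw [← sq, mul_pow, h2]
      field_simp
      try ring
    rw [h3, hμ, Real.cos_arctan, Real.sin_arctan]
    generalize Real.sqrt (1 + (1 / α) ^ 2) = s at *
    field_simp at h2 ⊢
    linarith
  have hr : ((Real.sqrt 2 : ℂ))⁻¹ * ((Real.sqrt 2 : ℂ))⁻¹ = 1 / 2 := by
    rw [← mul_inv, ← Complex.ofReal_mul, Real.mul_self_sqrt (by norm_num)]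
    norm_num
  rw [← key]
  subst hEPR hN₁ hN₂ hM₁ hM₂ hσz hσx
  simp [dotProduct, Matrix.mulVec, Fintype.sum_prod_type, Fin.sum_univ_two,
    Matrix.kroneckerMap_apply, -Complex.ofReal_cos, -Complex.ofReal_sin]
  generalize ((Real.sqrt 2 : ℂ))⁻¹ = r at *
  linear_combination (4 * α * (Real.cos μ : ℂ) + 4 * (Real.sin μ : ℂ)) * hr
end

section
/- Let μ ∈ (0, π/2), c = cos(μ), s = sin(μ), α = c/s. Let H_A, H_B be finite-dimensional complex Hilbert spaces, M₁, M₂ self-adjoint operators on H_A with M₁² = M₂² = 1, and N₁, N₂ self-adjoint operators on H_B with N₁² = N₂² = 1. On H_A ⊗ H_B define Ī = (2/s)·1 − (c/s)(M₁⊗N₁ + M₁⊗N₂) − M₂⊗N₁ + M₂⊗N₂, Z_A = M₁⊗1, X_A = M₂⊗1, Z_B = (1⊗(N₁+N₂))/(2c), X_B = (1⊗(N₁−N₂))/(2s). Then the two sum-of-squares identities hold: Ī = (s·Ī² + 4sc²·(Z_A X_B + X_A Z_B)²)/4 and Ī = (c²/s)·(Z_A − Z_B)² + s·(X_A − X_B)².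 -/
open Matrix Kronecker

/-- Two sum-of-squares decompositions of the shifted weighted-CHSH Bell
operator.  `H_A = ℂ^{nA}`, `H_B = ℂ^{nB}`, `H_A ⊗ H_B ≅ ℂ^{nA·nB}`, operator tensor
products are Kronecker products. -/
theorem stmt_14 (μ : ℝ) (hμ : μ ∈ Set.Ioo 0 (Real.pi / 2))
    (c s α : ℝ) (hc : c = Real.cos μ) (hs : s = Real.sin μ) (hα : α = c / s)
    (nA nB : ℕ)
    (M₁ M₂ : Matrix (Fin nA) (Fin nA) ℂ)
    (hM₁ : M₁.IsHermitian) (hM₁sq : M₁ * M₁ = 1)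
    (hM₂ : M₂.IsHermitian) (hM₂sq : M₂ * M₂ = 1)
    (N₁ N₂ : Matrix (Fin nB) (Fin nB) ℂ)
    (hN₁ : N₁.IsHermitian) (hN₁sq : N₁ * N₁ = 1)
    (hN₂ : N₂.IsHermitian) (hN₂sq : N₂ * N₂ = 1)
    (Ibar ZA XA ZB XB : Matrix (Fin nA × Fin nB) (Fin nA × Fin nB) ℂ)
    (hIbar : Ibar = ((2 / s : ℝ) : ℂ) • (1 : Matrix (Fin nA × Fin nB) (Fin nA × Fin nB) ℂ) -
        ((c / s : ℝ) : ℂ) • (M₁ ⊗ₖ N₁ + M₁ ⊗ₖ N₂) - M₂ ⊗ₖ N₁ + M₂ ⊗ₖ N₂)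
    (hZA : ZA = M₁ ⊗ₖ (1 : Matrix (Fin nB) (Fin nB) ℂ))
    (hXA : XA = M₂ ⊗ₖ (1 : Matrix (Fin nB) (Fin nB) ℂ))
    (hZB : ZB = ((2 * c : ℝ) : ℂ)⁻¹ • ((1 : Matrix (Fin nA) (Fin nA) ℂ) ⊗ₖ (N₁ + N₂)))
    (hXB : XB = ((2 * s : ℝ) : ℂ)⁻¹ • ((1 : Matrix (Fin nA) (Fin nA) ℂ) ⊗ₖ (N₁ - N₂))) :
    Ibar = ((4 : ℂ))⁻¹ • ((s : ℂ) • (Ibar * Ibar) +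
        ((4 * s * c ^ 2 : ℝ) : ℂ) • ((ZA * XB + XA * ZB) * (ZA * XB + XA * ZB))) ∧
    Ibar = ((c ^ 2 / s : ℝ) : ℂ) • ((ZA - ZB) * (ZA - ZB)) +
        ((s : ℝ) : ℂ) • ((XA - XB) * (XA - XB)) := by
  have hs0 : (s : ℂ) ≠ 0 := by
    have := Real.sin_pos_of_pos_of_lt_pi hμ.1 (by linarith [hμ.2, Real.pi_pos])
    rw [← hs] at this
    exact_mod_cast this.ne'
  have hc0 : (c : ℂ) ≠ 0 := by
    have := Real.cos_pos_of_mem_Ioo ⟨by linarith [hμ.1, Real.pi_pos], hμ.2⟩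
    rw [← hc] at this
    exact_mod_cast this.ne'
  have hcs : (c : ℂ) ^ 2 + (s : ℂ) ^ 2 = 1 := by
    have := Real.cos_sq_add_sin_sq μ
    rw [← hc, ← hs] at this
    exact_mod_cast this
  subst hIbar hZA hXA hZB hXB
  push_cast
  generalize (s : ℂ) = S at *
  generalize (c : ℂ) = C at *
  constructor
  all_goals
    simp only [sub_eq_add_neg, ← neg_one_smul ℂ (_ : Matrix (Fin nB) (Fin nB) ℂ),
      ← neg_one_smul ℂ (_ : Matrix (Fin nA × Fin nB) (Fin nA × Fin nB) ℂ),
      kronecker_add, kronecker_smul, smul_add, mul_add, add_mul,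
      smul_mul_assoc, mul_smul_comm, ← mul_kronecker_mul, mul_one, one_mul,
      hM₁sq, hM₂sq, hN₁sq, hN₂sq, one_kronecker_one]
    match_scalars
  all_goals (field_simp; try ring_nf)
  all_goals grind
end

section
/- There is a universal constant C > 0 with the following property. Let H_A, H_B be finite-dimensional complex Hilbert spaces, ψ ∈ H_A ⊗ H_B a unit vector, O_A, U_A unitaries on H_A, O_B, U_B unitaries on H_B, r ≥ 2 an integer, and δ, δ₀ ≥ 0 real numbers. Suppose ‖(O_A ⊗ 1)ψ − (1 ⊗ O_B)ψ‖ ≤ δ, ‖(U_A ⊗ 1)ψ − (1 ⊗ U_B)ψ‖ ≤ δ, and ‖((O_A U_A^† − U_A^† O_A^r) ⊗ 1)ψ‖ ≤ δ₀. Then for every integer l ≥ 1: ‖((O_A (U_A^†)^l − (U_A^†)^l O_A^{r^l}) ⊗ 1)ψ‖ ≤ C·r^{l+1}·(δ + δ₀). -/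
open Matrix Kronecker

/-- The action of a matrix on a vector of the corresponding Euclidean (Hilbert) space. -/
noncomputable def mApply {ι κ : Type*} [Fintype ι] (A : Matrix κ ι ℂ) (v : EuclideanSpace ℂ ι) :
    EuclideanSpace ℂ κ :=
  (WithLp.equiv 2 (κ → ℂ)).symm (A.mulVec (WithLp.equiv 2 (ι → ℂ) v))

theorem aux_abs {R : Type*} [Ring R] [StarRing R] (p : R → ℝ) (p0 : p 0 = 0)
    (padd : ∀ a b, p (a + b) ≤ p a + p b) (pneg : ∀ a, p (-a) = p a)
    (pu : ∀ Q ∈ unitary R, ∀ a, p (Q * a) = p a)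
    (O V W B : R) (hO : O ∈ unitary R) (hV : V ∈ unitary R) (hW : W ∈ unitary R)
    (hB : B ∈ unitary R) (cOB : Commute O B) (cVB : Commute V B) (cOW : Commute O W)
    (cVW : Commute V W) (r : ℕ) (hr : 2 ≤ r) (δ δ₀ : ℝ) (hδ : 0 ≤ δ) (hδ₀ : 0 ≤ δ₀)
    (h1 : p (O - B) ≤ δ) (h2 : p (V - W) ≤ δ) (h3 : p (O * V - V * O ^ r) ≤ δ₀) (l : ℕ) :
    p (O * V ^ l - V ^ l * O ^ r ^ l) ≤ 3 * r ^ (l + 1) * (δ + δ₀) := by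
  have hpow : ∀ Q ∈ unitary R, ∀ n : ℕ, Q ^ n ∈ unitary R := fun Q hQ n => pow_mem hQ n
  have psymm : ∀ a b, p (a - b) = p (b - a) := fun a b => by rw [← pneg, neg_sub]
  have hp : ∀ n : ℕ, p (O ^ n - B ^ n) ≤ n * δ := by
    intro n
    induction n with
    | zero => simp [p0]
    | succ n ih =>
      have e : O ^ (n+1) - B ^ (n+1) = O * (O ^ n - B ^ n) + B ^ n * (O - B) := by
        have := (cOB.pow_right n).eq
        rw [mul_sub, mul_sub, this, pow_succ', pow_succ]; abel
      rw [e]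
      refine (padd _ _).trans ?_
      rw [pu _ hO, pu _ (hpow _ hB n)]
      push_cast; linarith
  have hf : ∀ k : ℕ, p (O ^ k * V - V * O ^ (r * k)) ≤ k * (δ₀ + 2 * r * δ) := by
    intro k
    induction k with
    | zero => simp [p0]
    | succ k ih =>
      have e : O ^ (k+1) * V - V * O ^ (r * (k+1)) =
          (O ^ k * (O * V - V * O ^ r) + (O ^ k * V) * (O ^ r - B ^ r)) +
          (B ^ r * (O ^ k * V - V * O ^ (r * k)) + (V * O ^ (r * k)) * (B ^ r - O ^ r)) := by
        have a1 := ((cOB.pow_left k).mul_left cVB).pow_right r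
        have a2 := (cVB.mul_left (cOB.pow_left (r*k))).pow_right r
        simp only [mul_sub]
        rw [a1.eq, a2.eq, pow_succ, mul_add, pow_add, mul_one]
        simp only [mul_assoc]; abel
      rw [e]
      refine (padd _ _).trans ((add_le_add (padd _ _) (padd _ _)).trans ?_)
      rw [pu _ (hpow _ hO k), pu _ (mul_mem (hpow _ hO k) hV), pu _ (hpow _ hB r),
        pu _ (mul_mem hV (hpow _ hO _)), psymm (B ^ r)]
      have := hp r
      push_cast; linarith
  have he : ∀ l : ℕ, p (O * V ^ l - V ^ l * O ^ r ^ l) ≤ r ^ l * (δ₀ + 2 * r * δ + 2 * δ) := by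
    intro l
    have hr' : (2:ℝ) ≤ r := by exact_mod_cast hr
    induction l with
    | zero => simp [p0]; positivity
    | succ l ih =>
      have e : O * V ^ (l+1) - V ^ (l+1) * O ^ r ^ (l+1) =
          ((O * V ^ l) * (V - W) + W * (O * V ^ l - V ^ l * O ^ r ^ l)) +
          ((V ^ l * O ^ r ^ l) * (W - V) + V ^ l * (O ^ r ^ l * V - V * O ^ (r * r ^ l))) := by
        have a1 := cOW.mul_left (cVW.pow_left l)
        have a2 := (cVW.pow_left l).mul_left (cOW.pow_left (r ^ l))
        simp only [mul_sub]
        rw [a1.eq, a2.eq, pow_succ V, pow_succ' r]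
        simp only [mul_assoc]; abel
      rw [e]
      refine (padd _ _).trans ((add_le_add (padd _ _) (padd _ _)).trans ?_)
      rw [pu _ (mul_mem hO (hpow _ hV l)), pu _ hW, pu _ (mul_mem (hpow _ hV l) (hpow _ hO _)),
        pu _ (hpow _ hV l), psymm W]
      have := hf (r ^ l)
      push_cast at this
      have h1' : (1:ℝ) ≤ (r:ℝ) ^ l := one_le_pow₀ (by linarith)
      have h4 : 2 * δ ≤ (r:ℝ) ^ l * (2 * δ) := le_mul_of_one_le_left (by linarith) h1'
      have hD : 0 ≤ (r:ℝ) ^ l * (δ₀ + 2 * r * δ + 2 * δ) := by positivity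
      have h5 : 2 * ((r:ℝ) ^ l * (δ₀ + 2 * r * δ + 2 * δ)) ≤
          r * ((r:ℝ) ^ l * (δ₀ + 2 * r * δ + 2 * δ)) := mul_le_mul_of_nonneg_right hr' hD
      rw [pow_succ' (r:ℝ), mul_assoc]
      linarith
  refine (he l).trans ?_
  have hr' : (2:ℝ) ≤ r := by exact_mod_cast hr
  have : δ₀ + 2 * r * δ + 2 * δ ≤ 3 * r * (δ + δ₀) := by nlinarith
  calc _ ≤ (r:ℝ) ^ l * (3 * r * (δ + δ₀)) := by gcongr
    _ = _ := by ring

theorem mApply_norm_unitary {ι : Type*} [Fintype ι] [DecidableEq ι] (Q a : Matrix ι ι ℂ)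
    (hQ : Q ∈ unitary (Matrix ι ι ℂ)) (v : EuclideanSpace ℂ ι) :
    ‖mApply (Q * a) v‖ = ‖mApply a v‖ := by
  have key : ∀ M : Matrix ι ι ℂ, ((‖mApply M v‖ : ℂ)) ^ 2 =
      star (v.ofLp) ⬝ᵥ ((Mᴴ * M) *ᵥ v.ofLp) := by
    intro M
    have := inner_self_eq_norm_sq_to_K (𝕜 := ℂ) (mApply M v)
    rw [EuclideanSpace.inner_eq_star_dotProduct] at this
    refine Eq.trans this.symm ?_
    simp only [mApply, WithLp.equiv_apply, WithLp.equiv_symm_apply]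
    rw [dotProduct_comm, ← mulVec_mulVec, star_mulVec, ← dotProduct_mulVec]
  have h : ((‖mApply (Q * a) v‖ : ℂ)) ^ 2 = (‖mApply a v‖ : ℂ) ^ 2 := by
    rw [key, key]
    have h2 : Qᴴ * Q = 1 := (Unitary.mem_iff.mp hQ).1
    rw [conjTranspose_mul, Matrix.mul_assoc, ← Matrix.mul_assoc Qᴴ, h2, Matrix.one_mul]
  have h' : ‖mApply (Q * a) v‖ ^ 2 = ‖mApply a v‖ ^ 2 := by exact_mod_cast h
  exact (sq_eq_sq₀ (norm_nonneg _) (norm_nonneg _)).mp h'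

theorem mApply_add' {ι : Type*} [Fintype ι] (a b : Matrix ι ι ℂ)
    (v : EuclideanSpace ℂ ι) : mApply (a + b) v = mApply a v + mApply b v := by
  simp [mApply, add_mulVec]

theorem mApply_neg' {ι : Type*} [Fintype ι] (a : Matrix ι ι ℂ)
    (v : EuclideanSpace ℂ ι) : mApply (-a) v = - mApply a v := by
  simp [mApply, neg_mulVec]

theorem mApply_sub' {ι : Type*} [Fintype ι] (a b : Matrix ι ι ℂ)
    (v : EuclideanSpace ℂ ι) : mApply (a - b) v = mApply a v - mApply b v := by
  rw [sub_eq_add_neg, mApply_add', mApply_neg', sub_eq_add_neg]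

/-- Propagation of the approximate conjugacy relation
`O_A U_A^† ≈ U_A^† O_A^r` (on the state) to all powers `l ≥ 1`. -/
theorem stmt_17 :
    ∃ C : ℝ, 0 < C ∧
      ∀ (nA nB : ℕ) (ψ : EuclideanSpace ℂ (Fin nA × Fin nB)), ‖ψ‖ = 1 →
      ∀ (OA UA : Matrix (Fin nA) (Fin nA) ℂ) (OB UB : Matrix (Fin nB) (Fin nB) ℂ),
        OA ∈ Matrix.unitaryGroup (Fin nA) ℂ → UA ∈ Matrix.unitaryGroup (Fin nA) ℂ →
        OB ∈ Matrix.unitaryGroup (Fin nB) ℂ → UB ∈ Matrix.unitaryGroup (Fin nB) ℂ →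
      ∀ (r : ℕ), 2 ≤ r → ∀ (δ δ₀ : ℝ), 0 ≤ δ → 0 ≤ δ₀ →
        ‖mApply (OA ⊗ₖ (1 : Matrix (Fin nB) (Fin nB) ℂ)) ψ -
          mApply ((1 : Matrix (Fin nA) (Fin nA) ℂ) ⊗ₖ OB) ψ‖ ≤ δ →
        ‖mApply (UA ⊗ₖ (1 : Matrix (Fin nB) (Fin nB) ℂ)) ψ -
          mApply ((1 : Matrix (Fin nA) (Fin nA) ℂ) ⊗ₖ UB) ψ‖ ≤ δ →
        ‖mApply ((OA * UAᴴ - UAᴴ * OA ^ r) ⊗ₖ (1 : Matrix (Fin nB) (Fin nB) ℂ)) ψ‖ ≤ δ₀ →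
      ∀ l : ℕ, 1 ≤ l →
        ‖mApply ((OA * UAᴴ ^ l - UAᴴ ^ l * OA ^ r ^ l) ⊗ₖ
            (1 : Matrix (Fin nB) (Fin nB) ℂ)) ψ‖ ≤ C * r ^ (l + 1) * (δ + δ₀) := by
  refine ⟨3, by norm_num, ?_⟩
  intro nA nB ψ _ OA UA OB UB hOA hUA hOB hUB r hr δ δ₀ hδ hδ₀ h1 h2 h3 l _
  have kA : ∀ X Y : Matrix (Fin nA) (Fin nA) ℂ, (X * Y) ⊗ₖ (1 : Matrix (Fin nB) (Fin nB) ℂ) =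
      (X ⊗ₖ 1) * (Y ⊗ₖ 1) := fun X Y => by rw [← mul_kronecker_mul, Matrix.one_mul]
  have kS : ∀ X Y : Matrix (Fin nA) (Fin nA) ℂ, (X - Y) ⊗ₖ (1 : Matrix (Fin nB) (Fin nB) ℂ) =
      (X ⊗ₖ 1) - (Y ⊗ₖ 1) := fun X Y => by
    ext i j; simp [kroneckerMap_apply, sub_mul]
  have kP : ∀ (X : Matrix (Fin nA) (Fin nA) ℂ) (n : ℕ),
      (X ^ n) ⊗ₖ (1 : Matrix (Fin nB) (Fin nB) ℂ) = (X ⊗ₖ 1) ^ n := fun X n => by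
    induction n with
    | zero => simp
    | succ n ih => rw [pow_succ, pow_succ, kA, ih]
  have cm : ∀ (X : Matrix (Fin nA) (Fin nA) ℂ) (Y : Matrix (Fin nB) (Fin nB) ℂ),
      Commute (X ⊗ₖ (1 : Matrix (Fin nB) (Fin nB) ℂ))
        ((1 : Matrix (Fin nA) (Fin nA) ℂ) ⊗ₖ Y) := fun X Y => by
    rw [Commute, SemiconjBy, ← mul_kronecker_mul, ← mul_kronecker_mul]; simp
  have uA : ∀ X ∈ Matrix.unitaryGroup (Fin nA) ℂ, X ⊗ₖ (1 : Matrix (Fin nB) (Fin nB) ℂ) ∈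
      unitary (Matrix (Fin nA × Fin nB) (Fin nA × Fin nB) ℂ) := fun X hX =>
    kronecker_mem_unitary hX (one_mem _)
  have uB : ∀ X ∈ Matrix.unitaryGroup (Fin nB) ℂ, (1 : Matrix (Fin nA) (Fin nA) ℂ) ⊗ₖ X ∈
      unitary (Matrix (Fin nA × Fin nB) (Fin nA × Fin nB) ℂ) := fun X hX =>
    kronecker_mem_unitary (one_mem _) hX
  have hVA : UAᴴ ∈ Matrix.unitaryGroup (Fin nA) ℂ := Unitary.star_mem hUA
  have hVB : UBᴴ ∈ Matrix.unitaryGroup (Fin nB) ℂ := Unitary.star_mem hUB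
  have eA : UAᴴ * UA = 1 := (Unitary.mem_iff.mp hUA).1
  have eB : UBᴴ * UB = 1 := (Unitary.mem_iff.mp hUB).1
  rw [kS, kA, kA, kP, kP]
  rw [kS, kA, kA, kP] at h3
  refine aux_abs (fun M => ‖mApply M ψ‖) (by simp [mApply]) ?_ ?_ ?_ _ _
    (1 ⊗ₖ UBᴴ) (1 ⊗ₖ OB) (uA _ hOA) (uA _ hVA) (uB _ hVB) (uB _ hOB) (cm _ _) (cm _ _) (cm _ _)
    (cm _ _) r hr δ δ₀ hδ hδ₀ ?_ ?_ h3 l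
  · intro a b
    simp only [mApply_add']
    exact norm_add_le _ _
  · intro a
    simp only [mApply_neg', norm_neg]
  · intro Q hQ a
    exact mApply_norm_unitary Q a hQ ψ
  · simp only [mApply_sub']; exact h1
  · have e : UAᴴ ⊗ₖ (1 : Matrix (Fin nB) (Fin nB) ℂ) - (1 : Matrix (Fin nA) (Fin nA) ℂ) ⊗ₖ UBᴴ =
        (UAᴴ ⊗ₖ UBᴴ) * (1 ⊗ₖ UB - UA ⊗ₖ 1) := by
      rw [mul_sub, ← mul_kronecker_mul, ← mul_kronecker_mul, eA, eB, Matrix.mul_one,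
        Matrix.mul_one]
    simp only [e]
    rw [mApply_norm_unitary _ _ (kronecker_mem_unitary hVA hVB), mApply_sub', norm_sub_rev]
    exact h2
end
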